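/- Let G be a graph with independence number α = α(G), let k be an integer, and set t = 256·4^{2α}, t' = max(1000t⁶, 20·R(R(4,α+1), α+1)) and t'' = 4t'⁴. Let M and M' be perfect matchings of G with the following properties: (a) r(M) < k−1 and r(M') > k; (b) |w_M(M Δ M')| ≤ t; (c) there is no perfect matching M1 with r(M1) = r(M) + 2 and |R(M Δ M1)| = 2; (d) there is no perfect matching M1' with r(M1') = r(M') − 2 and |B(M' Δ M1')| = 2; (e) the set of M-alternating cycles M Δ M' contains no 0-skip; (f) the set of M-alternating cycles M Δ M' contains no 0-skip-cycle set. If G has at least one perfect matching with exactly k red edges, then there exists a perfect matching M* of G with r(M*) = k and |E(M Δ M*)| ≤ 4t''³. -/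

import Mathlib

open Finset

/-- `M` is (the edge set of) a perfect matching of `G`: all its edges are edges of `G` and
every vertex belongs to exactly one edge of `M`. -/
def IsPM {V : Type*} [DecidableEq V] (G : SimpleGraph V) (M : Finset (Sym2 V)) : Prop :=
  ↑M ⊆ G.edgeSet ∧ ∀ v : V, ∃! e, e ∈ M ∧ v ∈ e

/-- Number of red edges in the edge set `F` (the coloring `red` marks the red edges). -/
def redCount {V : Type*} [DecidableEq V] (red : Sym2 V → Bool) (F : Finset (Sym2 V)) : ℕ :=
  (F.filter fun e => red e = true).card

/-- Number of blue edges in the edge set `F`. -/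
def blueCount {V : Type*} [DecidableEq V] (red : Sym2 V → Bool) (F : Finset (Sym2 V)) : ℕ :=
  (F.filter fun e => red e = false).card

/-- The weight `w_M(e)`: 0 for blue edges, +1 for red non-matching edges, −1 for red
matching edges. -/
def wt {V : Type*} [DecidableEq V] (red : Sym2 V → Bool) (M : Finset (Sym2 V))
    (e : Sym2 V) : ℤ :=
  if red e then (if e ∈ M then -1 else 1) else 0

/-- `w_M(F)`, the total weight of an edge set `F`. -/
def wSum {V : Type*} [DecidableEq V] (red : Sym2 V → Bool) (M F : Finset (Sym2 V)) : ℤ :=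
  ∑ e ∈ F, wt red M e

/-- A list of edges alternates with respect to the matching `M`: consecutive edges are
alternately in and out of `M`. -/
def altList {V : Type*} [DecidableEq V] (M : Finset (Sym2 V)) (l : List (Sym2 V)) : Prop :=
  l.Chain' fun e f => ¬((e ∈ M) ↔ (f ∈ M))

/-- `C` is (the edge set of) an `M`-alternating cycle in `G`: it is traced by a cycle walk
whose edges alternate (cyclically) between `M` and non-`M` edges. -/
def IsAltCycle {V : Type*} [DecidableEq V] (G : SimpleGraph V)
    (M C : Finset (Sym2 V)) : Prop :=
  ∃ (v : V) (p : G.Walk v v), p.IsCycle ∧ p.edges.toFinset = C ∧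
    altList M (p.edges ++ p.edges.take 1)

/-- `P` is (the edge set of) an `M`-alternating path in `G`. -/
def IsAltPath {V : Type*} [DecidableEq V] (G : SimpleGraph V)
    (M P : Finset (Sym2 V)) : Prop :=
  ∃ (u v : V) (p : G.Walk u v), p.IsPath ∧ p.edges.toFinset = P ∧ altList M p.edges

/-- The symmetric difference of two edge sets. -/
def sd {V : Type*} [DecidableEq V] (M M' : Finset (Sym2 V)) : Finset (Sym2 V) :=
  (M \ M') ∪ (M' \ M)

/-- The set of vertices covered by an edge set. -/
def edgeVerts {V : Type*} (F : Finset (Sym2 V)) : Set V := {v | ∃ e ∈ F, v ∈ e}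

/-- `𝒞` is a set of pairwise vertex-disjoint `M`-alternating cycles of `G`. -/
def IsAltCycleSet {V : Type*} [DecidableEq V] (G : SimpleGraph V) (M : Finset (Sym2 V))
    (𝒞 : Finset (Finset (Sym2 V))) : Prop :=
  (∀ C ∈ 𝒞, IsAltCycle G M C) ∧
    (𝒞 : Set (Finset (Sym2 V))).Pairwise fun C C' => Disjoint (edgeVerts C) (edgeVerts C')

/-- A skip on the `M`-alternating cycle `C` (with respect to the coloring `red`):
two non-matching chords `e1 ≠ e2` of `C`, not edges of `C`, such that replacing two
stretches of `C` by them yields a strictly shorter `M`-alternating cycle `C'` whose weight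
differs from that of `C` by at most 4 in absolute value. -/
structure Skip {V : Type*} [DecidableEq V] (G : SimpleGraph V) (red : Sym2 V → Bool)
    (M C : Finset (Sym2 V)) where
  e1 : Sym2 V
  e2 : Sym2 V
  C' : Finset (Sym2 V)
  hne : e1 ≠ e2
  he1G : e1 ∈ G.edgeSet
  he2G : e2 ∈ G.edgeSet
  he1M : e1 ∉ M
  he2M : e2 ∉ M
  he1C : e1 ∉ C
  he2C : e2 ∉ C
  halt : IsAltCycle G M C'
  hmem1 : e1 ∈ C'
  hmem2 : e2 ∈ C'
  hsub : C' \ {e1, e2} ⊆ C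
  hsmall : C'.card < C.card
  hwbound : |wSum red M C' - wSum red M C| ≤ 4

/-- The weight `w(S) = w_M(C') − w_M(C)` of a skip. -/
def Skip.w {V : Type*} [DecidableEq V] {G : SimpleGraph V} {red : Sym2 V → Bool}
    {M C : Finset (Sym2 V)} (S : Skip G red M C) : ℤ :=
  wSum red M S.C' - wSum red M C

/-- The skip `S` is contained in the path `P` along `C`: the stretch of `C` removed by
the skip lies on `P`. -/
def Skip.In {V : Type*} [DecidableEq V] {G : SimpleGraph V} {red : Sym2 V → Bool}
    {M C : Finset (Sym2 V)} (S : Skip G red M C) (P : Finset (Sym2 V)) : Prop :=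
  C \ S.C' ⊆ P

/-- Two skips on `C` are disjoint: they are contained in disjoint paths along `C`. -/
def Skip.Disj {V : Type*} [DecidableEq V] {G : SimpleGraph V} {red : Sym2 V → Bool}
    {M C : Finset (Sym2 V)} (S1 S2 : Skip G red M C) : Prop :=
  ∃ P1 P2 : Finset (Sym2 V), P1 ⊆ C ∧ P2 ⊆ C ∧ Disjoint P1 P2 ∧
    IsAltPath G M P1 ∧ IsAltPath G M P2 ∧ S1.In P1 ∧ S2.In P2

/-- A skip living on one of the cycles of the family `𝒞`. -/
structure SkipOn {V : Type*} [DecidableEq V] (G : SimpleGraph V) (red : Sym2 V → Bool)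
    (M : Finset (Sym2 V)) (𝒞 : Finset (Finset (Sym2 V))) where
  C : Finset (Sym2 V)
  hC : C ∈ 𝒞
  S : Skip G red M C

/-- Two skips on cycles of `𝒞` are disjoint: either they live on different
(vertex-disjoint) cycles, or they are disjoint skips on the same cycle. -/
def SkipOn.Disj {V : Type*} [DecidableEq V] {G : SimpleGraph V} {red : Sym2 V → Bool}
    {M : Finset (Sym2 V)} {𝒞 : Finset (Finset (Sym2 V))}
    (T1 T2 : SkipOn G red M 𝒞) : Prop :=
  T1.C ≠ T2.C ∨ ∃ h : T1.C = T2.C, Skip.Disj (h ▸ T1.S) T2.S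

/-- `𝒞` contains a 0-skip set: a nonempty collection of pairwise disjoint skips on cycles
of `𝒞` of total weight 0. -/
def HasZeroSkipSet {V : Type*} [DecidableEq V] (G : SimpleGraph V) (red : Sym2 V → Bool)
    (M : Finset (Sym2 V)) (𝒞 : Finset (Finset (Sym2 V))) : Prop :=
  ∃ L : List (SkipOn G red M 𝒞), L ≠ [] ∧ L.Pairwise SkipOn.Disj ∧
    (L.map fun T => T.S.w).sum = 0

/-- `𝒞` contains a 0-skip-cycle set: a nonempty collection of pairwise disjoint skips on
cycles of `𝒞` and/or whole cycles `D ⊆ 𝒞` (the skips living on cycles not in `D`), such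
that the total weight of the skips minus the total weight of the cycles is 0. -/
def HasZeroSkipCycleSet {V : Type*} [DecidableEq V] (G : SimpleGraph V)
    (red : Sym2 V → Bool) (M : Finset (Sym2 V)) (𝒞 : Finset (Finset (Sym2 V))) : Prop :=
  ∃ (L : List (SkipOn G red M 𝒞)) (D : Finset (Finset (Sym2 V))),
    D ⊆ 𝒞 ∧ (L ≠ [] ∨ D.Nonempty) ∧ L.Pairwise SkipOn.Disj ∧ (∀ T ∈ L, T.C ∉ D) ∧
      (L.map fun T => T.S.w).sum - (∑ C ∈ D, wSum red M C) = 0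

/-- The independence number `α(G)`: the maximum size of a set of pairwise non-adjacent
vertices. -/
noncomputable def indepNum {V : Type*} (G : SimpleGraph V) : ℕ :=
  sSup {n | ∃ s : Finset V, s.card = n ∧ (s : Set V).Pairwise fun u v => ¬ G.Adj u v}

/-- `RamseyProp N s t`: every graph on `N` vertices contains a clique of size `s` or an
independent set of size `t`. -/
def RamseyProp (N s t : ℕ) : Prop :=
  ∀ H : SimpleGraph (Fin N),
    (∃ A : Finset (Fin N), A.card = s ∧ (A : Set (Fin N)).Pairwise H.Adj) ∨
    (∃ B : Finset (Fin N), B.card = t ∧ (B : Set (Fin N)).Pairwise fun u v => ¬ H.Adj u v)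

/-- The Ramsey number `R(s,t)`: the smallest `N` such that every graph on `N` vertices
contains a clique of size `s` or an independent set of size `t`. -/
noncomputable def ramsey (s t : ℕ) : ℕ := sInf {N | RamseyProp N s t}

/-!
A 0-skip-cycle set inside `M Δ N` turns `N` into a perfect matching with equally many red edges
that is closer to `M`, so a perfect matching `N` with `k` red edges that is closest to `M` leaves
no 0-skip-cycle set in `M Δ N`. By Ramsey's theorem, every long stretch of an alternating cycle has
chords forming skips. A stretch along which the partial weights of a cycle rise or fall
by a lot therefore carries many disjoint skips of small weight and a common sign, and two such
families of opposite signs contain subfamilies of cancelling weights. Hence, without 0-skip-cycle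
sets, the cycles are few and all their partial weights are small. On a long cycle, some
partial weight is then repeated so often that, by (c) and (d), skips at the positions where it is
attained only use edges of one colour, and one of them is a 0-skip, unless the cycle shares many
matching edges with `M Δ M'`. So first `M Δ M'`, and then `M Δ N`, is small.
-/

/-! ### Ramsey numbers -/

theorem exists_isNClique_or_isNClique_compl (s t : ℕ) :
    ∃ N, ∀ {W : Type} (H : SimpleGraph W) (S : Finset W), N ≤ #S →
      (∃ A ⊆ S, H.IsNClique s A) ∨ ∃ A ⊆ S, Hᶜ.IsNClique t A := by
  classical
  induction s generalizing t with
  | zero => exact ⟨0, fun H S _ => .inl ⟨∅, by simp⟩⟩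
  | succ s ihs =>
    induction t with
    | zero => exact ⟨0, fun H S _ => .inr ⟨∅, by simp⟩⟩
    | succ t iht =>
      obtain ⟨N₁, h₁⟩ := ihs (t + 1)
      obtain ⟨N₂, h₂⟩ := iht
      refine ⟨N₁ + N₂ + 1, fun H S hS => ?_⟩
      obtain ⟨v, hv⟩ : S.Nonempty := card_pos.1 (by omega)
      have hsplit : #{u ∈ S.erase v | H.Adj v u} + #{u ∈ S.erase v | ¬ H.Adj v u} = #S - 1 := by
        rw [card_filter_add_card_filter_not, card_erase_of_mem hv]
      have hsub (p : _ → Prop) [DecidablePred p] : (S.erase v).filter p ⊆ S :=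
        (filter_subset _ _).trans (erase_subset _ _)
      rcases le_or_gt N₁ #{u ∈ S.erase v | H.Adj v u} with hle | hlt
      · rcases h₁ H _ hle with ⟨A, hA, hcl⟩ | ⟨A, hA, hcl⟩
        · exact .inl ⟨insert v A, insert_subset hv (hA.trans (hsub _)),
            hcl.insert fun u hu => (mem_filter.1 (hA hu)).2⟩
        · exact .inr ⟨A, hA.trans (hsub _), hcl⟩
      · have hle : N₂ ≤ #{u ∈ S.erase v | ¬ H.Adj v u} := by omega
        rcases h₂ H _ hle with ⟨A, hA, hcl⟩ | ⟨A, hA, hcl⟩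
        · exact .inl ⟨A, hA.trans (hsub _), hcl⟩
        · refine .inr ⟨insert v A, insert_subset hv (hA.trans (hsub _)), hcl.insert fun u hu => ?_⟩
          obtain ⟨hu, hadj⟩ := mem_filter.1 (hA hu)
          exact ⟨(ne_of_mem_erase hu).symm, hadj⟩

theorem ramseyProp_ramsey (s t : ℕ) : RamseyProp (ramsey s t) s t := by
  refine Nat.sInf_mem (s := {N | RamseyProp N s t}) ?_
  obtain ⟨N, hN⟩ := exists_isNClique_or_isNClique_compl s t
  refine ⟨N, fun H => ?_⟩
  rcases hN H univ (by simp) with ⟨A, -, hcl⟩ | ⟨A, -, hcl⟩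
  · exact .inl ⟨A, hcl.card_eq, hcl.isClique⟩
  · exact .inr ⟨A, hcl.card_eq, fun u hu v hv huv => (hcl.isClique hu hv huv).2⟩

section TwinCliques

variable {V : Type*} {G : SimpleGraph V}

theorem card_le_indepNum [Finite V] {s : Finset V}
    (hs : (s : Set V).Pairwise fun u v => ¬ G.Adj u v) : #s ≤ indepNum G := by
  have := Fintype.ofFinite V
  refine le_csSup ⟨Fintype.card V, ?_⟩ ⟨s, rfl, hs⟩
  rintro _ ⟨s, rfl, -⟩
  exact s.card_le_univ

theorem exists_orderEmbedding_pairwise_adj [Finite V] (G : SimpleGraph V) {s : ℕ}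
    {x : Fin (ramsey s (indepNum G + 1)) → V} (hx : x.Injective) :
    ∃ f : Fin s ↪o Fin (ramsey s (indepNum G + 1)), ∀ p q, p ≠ q → G.Adj (x (f p)) (x (f q)) := by
  rcases ramseyProp_ramsey s (indepNum G + 1) (G.comap x) with ⟨A, hA, hadj⟩ | ⟨B, hB, hadj⟩
  · exact ⟨A.orderEmbOfFin hA, fun p q hpq => hadj (A.orderEmbOfFin_mem hA p)
      (A.orderEmbOfFin_mem hA q) ((A.orderEmbOfFin hA).injective.ne hpq)⟩
  · have hle : #(B.map ⟨x, hx⟩) ≤ indepNum G := card_le_indepNum <| by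
      rw [coe_map]
      rintro _ ⟨i, hi, rfl⟩ _ ⟨j, hj, rfl⟩ hij
      exact hadj hi hj (ne_of_apply_ne x hij)
    rw [card_map, hB] at hle
    omega

/-- Any two sequences of `R` distinct vertices of `G` have `s` common positions at which each of
them spans a clique. -/
def HasTwinCliques (G : SimpleGraph V) (s R : ℕ) : Prop :=
  ∀ x y : ℕ → V, Set.InjOn x (Set.Iio R) → Set.InjOn y (Set.Iio R) →
    ∃ f : Fin s → ℕ, StrictMono f ∧ (∀ p, f p < R) ∧
      ∀ p q, p ≠ q → G.Adj (x (f p)) (x (f q)) ∧ G.Adj (y (f p)) (y (f q))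

theorem HasTwinCliques.mono {s s' R : ℕ} (h : HasTwinCliques G s R) (hs : s' ≤ s) :
    HasTwinCliques G s' R := by
  intro x y hx hy
  obtain ⟨f, hf, hfR, hadj⟩ := h x y hx hy
  exact ⟨f ∘ Fin.castLE hs, hf.comp (Fin.strictMono_castLE hs), fun p => hfR _,
    fun p q hpq => hadj _ _ ((Fin.castLE_injective hs).ne hpq)⟩

theorem hasTwinCliques_ramsey [Finite V] (G : SimpleGraph V) (s : ℕ) :
    HasTwinCliques G s (ramsey (ramsey s (indepNum G + 1)) (indepNum G + 1)) := by
  intro x y hx hy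
  obtain ⟨f, hf⟩ := exists_orderEmbedding_pairwise_adj G (x := fun i => x i)
    fun i j h => Fin.ext (hx i.2 j.2 h)
  obtain ⟨g, hg⟩ := exists_orderEmbedding_pairwise_adj G (x := fun i => y (f i))
    fun i j h => f.injective (Fin.ext (hy (f i).2 (f j).2 h))
  exact ⟨fun p => f (g p), fun p q h => f.strictMono (g.strictMono h), fun p => (f (g p)).2,
    fun p q h => ⟨hf _ _ (g.injective.ne h), hg p q h⟩⟩

end TwinCliques

/-! ### Matchings and weights -/

theorem disjoint_of_disjoint_edgeVerts {V : Type*} {F F' : Finset (Sym2 V)}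
    (h : Disjoint (edgeVerts F) (edgeVerts F')) : Disjoint F F' :=
  Finset.disjoint_left.2 fun e he he' =>
    Set.disjoint_left.1 h ⟨e, he, e.out_fst_mem⟩ ⟨e, he', e.out_fst_mem⟩

theorem exists_consecutive_edges_of_isCycle {V : Type*} {G : SimpleGraph V} {u v : V}
    {p : G.Walk u u} (hp : p.IsCycle) (hv : v ∈ p.support) :
    ∃ i < p.length, ∃ j < p.length, (j = i + 1 ∨ i + 1 = p.length ∧ j = 0) ∧
      v ∈ s(p.getVert i, p.getVert (i + 1)) ∧ v ∈ s(p.getVert j, p.getVert (j + 1)) ∧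
      ∀ m < p.length, v ∈ s(p.getVert m, p.getVert (m + 1)) → m = i ∨ m = j := by
  have hlen := hp.three_le_length
  have h0 : p.getVert 0 = p.getVert p.length := by simp
  obtain ⟨k, hk, hkl, rfl⟩ : ∃ k, 1 ≤ k ∧ k ≤ p.length ∧ p.getVert k = v := by
    obtain ⟨k, rfl, hkl⟩ := SimpleGraph.Walk.mem_support_iff_exists_getVert.1 hv
    rcases Nat.eq_zero_or_pos k with rfl | hk
    · exact ⟨p.length, by omega, le_rfl, h0.symm⟩
    · exact ⟨k, hk, hkl, rfl⟩
  have hinj {m : ℕ} (hm : 1 ≤ m ∧ m ≤ p.length) (h : p.getVert k = p.getVert m) : k = m :=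
    hp.getVert_injOn ⟨hk, hkl⟩ hm h
  have hprev : p.getVert k ∈ s(p.getVert (k - 1), p.getVert (k - 1 + 1)) := by
    simp [Nat.sub_add_cancel hk]
  rcases hkl.eq_or_lt with rfl | hkl
  · refine ⟨p.length - 1, by omega, 0, by omega, by omega, hprev, by simp, fun m hm hvm => ?_⟩
    rcases Sym2.mem_iff.1 hvm with h | h
    · rcases Nat.eq_zero_or_pos m with rfl | hm0
      · exact .inr rfl
      · exact .inr (by have := hinj ⟨hm0, hm.le⟩ h; omega)
    · exact .inl (by have := hinj (m := m + 1) (by omega) h; omega)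
  · refine ⟨k - 1, by omega, k, hkl, by omega, hprev, by simp, fun m hm hvm => ?_⟩
    rcases Sym2.mem_iff.1 hvm with h | h
    · rcases Nat.eq_zero_or_pos m with rfl | hm0
      · have := hinj (m := p.length) (by omega) (h.trans h0)
        omega
      · exact .inr (hinj ⟨hm0, hm.le⟩ h).symm
    · exact .inl (by have := hinj (m := m + 1) (by omega) h; omega)

section Switching

variable {V : Type*} [DecidableEq V] {G : SimpleGraph V} {red : Sym2 V → Bool}
  {M N C C' : Finset (Sym2 V)} {e f g : Sym2 V} {v : V}

theorem mem_sd : e ∈ sd M N ↔ e ∈ M ∧ e ∉ N ∨ e ∈ N ∧ e ∉ M := mem_symmDiff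

theorem sd_sd_cancel_left (M N : Finset (Sym2 V)) : sd M (sd M N) = N :=
  symmDiff_symmDiff_cancel_left M N

theorem sd_assoc (M N C : Finset (Sym2 V)) : sd (sd M N) C = sd M (sd N C) :=
  symmDiff_assoc M N C

theorem sd_empty (M : Finset (Sym2 V)) : sd M ∅ = M := symmDiff_bot M

theorem IsPM.eq_of_mem (hM : IsPM G M) (he : e ∈ M) (hf : f ∈ M) (hve : v ∈ e) (hvf : v ∈ f) :
    e = f :=
  (hM.2 v).unique ⟨he, hve⟩ ⟨hf, hvf⟩

theorem IsPM.of_forall_vertex {Q : Finset (Sym2 V)}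
    (h : ∀ v, ∃ P, IsPM G P ∧ ∀ e, v ∈ e → (e ∈ Q ↔ e ∈ P)) : IsPM G Q := by
  refine ⟨fun e he => ?_, fun v => ?_⟩
  · obtain ⟨v, hv⟩ : ∃ v, v ∈ e := ⟨_, e.out_fst_mem⟩
    obtain ⟨P, hP, hQP⟩ := h v
    exact hP.1 ((hQP e hv).1 he)
  · obtain ⟨P, hP, hQP⟩ := h v
    obtain ⟨e, ⟨heP, hve⟩, huniq⟩ := hP.2 v
    exact ⟨e, ⟨(hQP e hve).2 heP, hve⟩, fun f hf => huniq f ⟨(hQP f hf.2).1 hf.1, hf.2⟩⟩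

theorem wt_of_mem (he : e ∈ M) : wt red M e = if red e then -1 else 0 := by simp [wt, he]

theorem wt_of_notMem (he : e ∉ M) : wt red M e = if red e then 1 else 0 := by simp [wt, he]

theorem wt_eq_neg_of_mem_sd (he : e ∈ sd M N) : wt red N e = -wt red M e := by
  rcases mem_sd.1 he with ⟨hM, hN⟩ | ⟨hN, hM⟩ <;>
    simp [wt, hM, hN, apply_ite Neg.neg]

theorem wt_eq_of_notMem_sd (he : e ∉ sd M N) : wt red N e = wt red M e := by
  have : e ∈ M ↔ e ∈ N := by rw [mem_sd] at he; tauto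
  simp [wt, this]

theorem redCount_eq_sum (red : Sym2 V → Bool) (F : Finset (Sym2 V)) :
    (redCount red F : ℤ) = ∑ e ∈ F, if red e then 1 else 0 := by
  simp [redCount]

theorem redCount_sd (red : Sym2 V → Bool) (M Z : Finset (Sym2 V)) :
    (redCount red (sd M Z) : ℤ) = redCount red M + wSum red M Z := by
  have hsplit (F F' : Finset (Sym2 V)) (φ : Sym2 V → ℤ) :
      ∑ e ∈ F, φ e = ∑ e ∈ F ∩ F', φ e + ∑ e ∈ F \ F', φ e := (sum_inter_add_sum_sdiff F F' φ).symm
  have hinter : ∑ e ∈ Z ∩ M, wt red M e = -∑ e ∈ M ∩ Z, if red e then (1 : ℤ) else 0 := by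
    rw [inter_comm, ← sum_neg_distrib]
    exact sum_congr rfl fun e he => by simp [wt_of_mem (mem_inter.1 he).1, apply_ite]
  have hsdiff : ∑ e ∈ Z \ M, wt red M e = ∑ e ∈ Z \ M, if red e then (1 : ℤ) else 0 :=
    sum_congr rfl fun e he => wt_of_notMem (mem_sdiff.1 he).2
  rw [redCount_eq_sum, redCount_eq_sum, wSum, sd, sum_union disjoint_sdiff_sdiff, hsplit M Z,
    hsplit Z M, hinter, hsdiff]
  ring

theorem redCount_true (F : Finset (Sym2 V)) : redCount (fun _ => true) F = #F := by
  simp [redCount]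

theorem wSum_sd (red : Sym2 V → Bool) (M N : Finset (Sym2 V)) :
    wSum red M (sd M N) = redCount red N - redCount red M := by
  have := redCount_sd red M (sd M N)
  rw [sd_sd_cancel_left] at this
  omega

theorem IsAltCycle.exists_incident (hC : IsAltCycle G M C) (hv : v ∈ edgeVerts C) :
    ∃ e ∈ C, ∃ f ∈ C, e ∈ M ∧ f ∉ M ∧ v ∈ e ∧ v ∈ f ∧ ∀ g ∈ C, v ∈ g → g = e ∨ g = f := by
  obtain ⟨u, p, hp, rfl, halt⟩ := hC
  have hedge {m : ℕ} (hm : m < p.length) :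
      s(p.getVert m, p.getVert (m + 1)) ∈ p.edges.toFinset := by
    rw [List.mem_toFinset, ← SimpleGraph.Walk.getElem_edges (by simpa using hm)]
    exact List.getElem_mem _
  have hvp : v ∈ p.support := by
    obtain ⟨e, he, hve⟩ := hv
    obtain ⟨w, rfl⟩ := Sym2.mem_iff_exists.1 hve
    exact p.fst_mem_support_of_mem_edges (List.mem_toFinset.1 he)
  obtain ⟨i, hi, j, hj, hij, hvi, hvj, honly⟩ := exists_consecutive_edges_of_isCycle hp hvp
  have halt_ij :
      ¬(s(p.getVert i, p.getVert (i + 1)) ∈ M ↔ s(p.getVert j, p.getVert (j + 1)) ∈ M) := by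
    have := List.isChain_iff_getElem.1 halt i (by simp; omega)
    rw [← SimpleGraph.Walk.getElem_edges (by simpa using hi),
      ← SimpleGraph.Walk.getElem_edges (by simpa using hj)]
    rcases hij with rfl | ⟨hi', rfl⟩
    · simpa [List.getElem_append, hi, hj] using this
    · simpa [List.getElem_append, hi, hi'] using this
  have honly' : ∀ g ∈ p.edges.toFinset, v ∈ g →
      g = s(p.getVert i, p.getVert (i + 1)) ∨ g = s(p.getVert j, p.getVert (j + 1)) := by
    intro g hg hvg
    obtain ⟨m, hm, rfl⟩ := List.getElem_of_mem (List.mem_toFinset.1 hg)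
    rw [SimpleGraph.Walk.getElem_edges] at hvg ⊢
    rcases honly m (by simpa using hm) hvg with rfl | rfl <;> simp
  by_cases hiM : s(p.getVert i, p.getVert (i + 1)) ∈ M
  · exact ⟨_, hedge hi, _, hedge hj, hiM, by tauto, hvi, hvj, honly'⟩
  · exact ⟨_, hedge hj, _, hedge hi, by tauto, hiM, hvj, hvi,
      fun g hg hvg => (honly' g hg hvg).symm⟩

theorem IsAltCycle.nonempty (hC : IsAltCycle G M C) : C.Nonempty := by
  obtain ⟨u, p, hp, rfl, -⟩ := hC
  have := hp.three_le_length
  exact List.toFinset_nonempty_iff _ |>.2 (List.ne_nil_of_length_pos (by simp; omega))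

theorem IsAltCycle.mem_of_mem_of_mem_edgeVerts (hC : IsAltCycle G M C) (hM : IsPM G M)
    (hv : v ∈ edgeVerts C) (he : e ∈ M) (hve : v ∈ e) : e ∈ C := by
  obtain ⟨e', he', -, -, heM, -, hve', -, -⟩ := hC.exists_incident hv
  rwa [hM.eq_of_mem he heM hve hve']

theorem IsAltCycle.subset_edgeSet (hC : IsAltCycle G M C) : ↑C ⊆ G.edgeSet := by
  obtain ⟨u, p, -, rfl, -⟩ := hC
  exact fun e he => p.edges_subset_edgeSet (List.mem_toFinset.1 he)

theorem IsAltCycle.isPM_sd (hC : IsAltCycle G M C) (hM : IsPM G M) : IsPM G (sd M C) := by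
  refine ⟨fun e he => ?_, fun v => ?_⟩
  · rcases mem_sd.1 he with h | h
    · exact hM.1 h.1
    · exact hC.subset_edgeSet h.1
  by_cases hv : v ∈ edgeVerts C
  · obtain ⟨e, -, f, hf, heM, hfM, -, hvf, honly⟩ := hC.exists_incident hv
    refine ⟨f, ⟨mem_sd.2 (.inr ⟨hf, hfM⟩), hvf⟩, fun g ⟨hg, hvg⟩ => ?_⟩
    rcases mem_sd.1 hg with ⟨hgM, hgC⟩ | ⟨hgC, hgM⟩
    · exact absurd (hC.mem_of_mem_of_mem_edgeVerts hM hv hgM hvg) hgC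
    · exact (honly g hgC hvg).resolve_left fun h => hgM (h ▸ heM)
  · obtain ⟨e, ⟨heM, hve⟩, huniq⟩ := hM.2 v
    have hiff {g : Sym2 V} (hvg : v ∈ g) : g ∈ sd M C ↔ g ∈ M := by
      have : g ∉ C := fun hg => hv ⟨g, hg, hvg⟩
      simp [mem_sd, this]
    exact ⟨e, ⟨(hiff hve).2 heM, hve⟩, fun g ⟨hg, hvg⟩ => huniq g ⟨(hiff hvg).1 hg, hvg⟩⟩

theorem IsAltCycle.mem_iff_mem_sd (hC : IsAltCycle G M C) (hM : IsPM G M) (hN : IsPM G N)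
    (hsub : C ⊆ sd M N) (hv : v ∈ edgeVerts C) (hvg : v ∈ g) : g ∈ C ↔ g ∈ sd M N := by
  refine ⟨fun hg => hsub hg, fun hg => ?_⟩
  obtain ⟨-, -, f, hf, -, hfM, -, hvf, -⟩ := hC.exists_incident hv
  rcases mem_sd.1 hg with ⟨hgM, -⟩ | ⟨hgN, -⟩
  · exact hC.mem_of_mem_of_mem_edgeVerts hM hv hgM hvg
  · have hfN : f ∈ N := by have := mem_sd.1 (hsub hf); tauto
    rwa [hN.eq_of_mem hgN hfN hvg hvf]

end Switching

/-! ### Exchanging along skips and cycles -/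

section Switching

variable {V : Type*} [DecidableEq V] {G : SimpleGraph V} {red : Sym2 V → Bool}
  {M N C C' Z Z' : Finset (Sym2 V)} {𝒞 : Finset (Finset (Sym2 V))}

theorem isPM_sd_union (hZ : IsPM G (sd N Z)) (hZ' : IsPM G (sd N Z'))
    (hdisj : Disjoint (edgeVerts Z) (edgeVerts Z')) : IsPM G (sd N (Z ∪ Z')) := by
  refine .of_forall_vertex fun v => ?_
  by_cases hv : v ∈ edgeVerts Z
  · refine ⟨_, hZ, fun e hve => ?_⟩
    have : e ∉ Z' := fun he => Set.disjoint_left.1 hdisj hv ⟨e, he, hve⟩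
    simp [mem_sd, this]
  · refine ⟨_, hZ', fun e hve => ?_⟩
    have : e ∉ Z := fun he => hv ⟨e, he, hve⟩
    simp [mem_sd, this]

theorem exists_isPM_sd_of_pairwise_disjoint (hN : IsPM G N) {Zs : List (Finset (Sym2 V))}
    (hZs : ∀ Z ∈ Zs, IsPM G (sd N Z))
    (hdisj : Zs.Pairwise fun Z Z' => Disjoint (edgeVerts Z) (edgeVerts Z')) :
    ∃ U, IsPM G (sd N U) ∧ (∀ e ∈ U, ∃ Z ∈ Zs, e ∈ Z) ∧
      ∀ φ : Sym2 V → ℤ, ∑ e ∈ U, φ e = (Zs.map fun Z => ∑ e ∈ Z, φ e).sum := by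
  induction Zs with
  | nil => exact ⟨∅, by rwa [sd_empty], by simp⟩
  | cons Z Zs ih =>
    rw [List.forall_mem_cons] at hZs
    rw [List.pairwise_cons] at hdisj
    obtain ⟨U, hU, hmem, hsum⟩ := ih hZs.2 hdisj.2
    have hZU : Disjoint (edgeVerts Z) (edgeVerts U) := by
      refine Set.disjoint_left.2 fun v hv ⟨e, he, hve⟩ => ?_
      obtain ⟨Z', hZ', heZ'⟩ := hmem e he
      exact Set.disjoint_left.1 (hdisj.1 Z' hZ') hv ⟨e, heZ', hve⟩
    refine ⟨Z ∪ U, isPM_sd_union hZs.1 hU hZU, fun e he => ?_, fun φ => ?_⟩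
    · rcases mem_union.1 he with he | he
      · exact ⟨Z, List.mem_cons_self, he⟩
      · obtain ⟨Z', hZ', heZ'⟩ := hmem e he
        exact ⟨Z', List.mem_cons_of_mem _ hZ', heZ'⟩
    · rw [sum_union (disjoint_of_disjoint_edgeVerts hZU), hsum, List.map_cons, List.sum_cons]

theorem IsAltCycle.isPM_sd_sd (hC : IsAltCycle G M C) (hM : IsPM G M) (hN : IsPM G N)
    (hsub : C ⊆ sd M N) (hC' : IsPM G (sd M C')) (hverts : edgeVerts C' ⊆ edgeVerts C) :
    IsPM G (sd N (sd C C')) := by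
  refine .of_forall_vertex fun v => ?_
  by_cases hv : v ∈ edgeVerts C
  · refine ⟨_, hC', fun e hve => ?_⟩
    have := hC.mem_iff_mem_sd hM hN hsub hv hve
    simp only [mem_sd] at this ⊢
    tauto
  · refine ⟨N, hN, fun e hve => ?_⟩
    have heC : e ∉ C := fun he => hv ⟨e, he, hve⟩
    have heC' : e ∉ C' := fun he => hv (hverts ⟨e, he, hve⟩)
    simp [mem_sd, heC, heC']

theorem IsAltCycle.isPM_sd_of_subset_sd (hC : IsAltCycle G M C) (hM : IsPM G M) (hN : IsPM G N)
    (hsub : C ⊆ sd M N) : IsPM G (sd N C) := by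
  simpa [sd_empty] using hC.isPM_sd_sd hM hN hsub (C' := ∅) (by rwa [sd_empty])
    fun v ⟨e, he, _⟩ => absurd he (notMem_empty e)

theorem IsAltCycle.wSum_sd_sd (hC : IsAltCycle G M C) (hM : IsPM G M) (hN : IsPM G N)
    (hsub : C ⊆ sd M N) (hverts : edgeVerts C' ⊆ edgeVerts C) :
    wSum red N (sd C C') = wSum red M C' - wSum red M C := by
  have hold : ∑ e ∈ C \ C', wt red N e = -∑ e ∈ C \ C', wt red M e := by
    rw [← sum_neg_distrib]
    exact sum_congr rfl fun e he => wt_eq_neg_of_mem_sd (hsub (mem_sdiff.1 he).1)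
  have hnew : ∑ e ∈ C' \ C, wt red N e = ∑ e ∈ C' \ C, wt red M e := by
    refine sum_congr rfl fun e he => wt_eq_of_notMem_sd fun hsd => (mem_sdiff.1 he).2 ?_
    have hv := e.out_fst_mem
    exact (hC.mem_iff_mem_sd hM hN hsub (hverts ⟨e, (mem_sdiff.1 he).1, hv⟩) hv).2 hsd
  rw [wSum, sd, sum_union disjoint_sdiff_sdiff, hold, hnew, wSum, wSum,
    ← sum_sdiff_sub_sum_sdiff (s₁ := C) (s₂ := C')]
  ring

theorem card_sd_sd_lt {F : Finset (Sym2 V)} (hsub : C ⊆ F) (hlt : #C' < #C) :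
    #(sd F (sd C C')) < #F := by
  have hle : sd F (sd C C') ⊆ F \ C ∪ C' := by
    intro e he
    have := @hsub e
    simp only [mem_sd, mem_union, mem_sdiff] at he ⊢
    tauto
  calc #(sd F (sd C C')) ≤ #(F \ C) + #C' := (card_le_card hle).trans (card_union_le _ _)
    _ < #(F \ C) + #C := by omega
    _ = #F := card_sdiff_add_card_eq_card hsub

theorem Skip.edgeVerts_subset (S : Skip G red M C) : edgeVerts S.C' ⊆ edgeVerts C := by
  intro v hv
  obtain ⟨e, he, -, -, heM, -, hve, -, -⟩ := S.halt.exists_incident hv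
  refine ⟨e, S.hsub (mem_sdiff.2 ⟨he, ?_⟩), hve⟩
  rw [mem_insert, mem_singleton]
  rintro (rfl | rfl)
  exacts [S.he1M heM, S.he2M heM]

theorem edgeVerts_sd_subset (h : edgeVerts C' ⊆ edgeVerts C) :
    edgeVerts (sd C C') ⊆ edgeVerts C := by
  rintro v ⟨e, he, hve⟩
  rcases mem_sd.1 he with he | he
  exacts [⟨e, he.1, hve⟩, h ⟨e, he.1, hve⟩]

theorem IsAltCycle.notMem_of_mem_edgeVerts_sd {f : Sym2 V} {v : V} (hM : IsPM G M)
    (hC : IsAltCycle G M C) (hC' : IsAltCycle G M C') (hv : v ∈ edgeVerts (sd C C')) (hf : f ∈ C)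
    (hfM : f ∉ M) (hvf : v ∈ f) : f ∉ C' := by
  intro hf'
  have hunique {D : Finset (Sym2 V)} (hD : IsAltCycle G M D) (hfD : f ∈ D) {g : Sym2 V}
      (hvg : v ∈ g) : g ∈ D ↔ g = f ∨ g ∈ M := by
    obtain ⟨e, he, f', hf', heM, -, hve, -, honly⟩ := hD.exists_incident ⟨f, hfD, hvf⟩
    have hff' : f = f' := (honly f hfD hvf).resolve_left fun h => hfM (h ▸ heM)
    refine ⟨fun hg => ?_, ?_⟩
    · rcases honly g hg hvg with rfl | rfl
      exacts [.inr heM, .inl hff'.symm]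
    · rintro (rfl | hgM)
      exacts [hfD, hM.eq_of_mem hgM heM hvg hve ▸ he]
  obtain ⟨g, hg, hvg⟩ := hv
  have := hunique hC hf hvg
  have := hunique hC' hf' hvg
  have := mem_sd.1 hg
  tauto

theorem Skip.Disj.disjoint_edgeVerts {S₁ S₂ : Skip G red M C} (h : S₁.Disj S₂) (hM : IsPM G M)
    (hC : IsAltCycle G M C) : Disjoint (edgeVerts (sd C S₁.C')) (edgeVerts (sd C S₂.C')) := by
  obtain ⟨P₁, P₂, -, -, hP, -, -, h₁, h₂⟩ := h
  refine Set.disjoint_left.2 fun v hv₁ hv₂ => ?_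
  obtain ⟨-, -, f, hf, -, hfM, -, hvf, -⟩ :=
    hC.exists_incident (edgeVerts_sd_subset S₁.edgeVerts_subset hv₁)
  have hmem (S : Skip G red M C) (hv : v ∈ edgeVerts (sd C S.C')) : f ∈ C \ S.C' :=
    mem_sdiff.2 ⟨hf, hC.notMem_of_mem_edgeVerts_sd hM S.halt hv hf hfM hvf⟩
  exact Finset.disjoint_left.1 hP (h₁ (hmem S₁ hv₁)) (h₂ (hmem S₂ hv₂))

theorem SkipOn.Disj.disjoint_edgeVerts {T₁ T₂ : SkipOn G red M 𝒞} (h : T₁.Disj T₂)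
    (hM : IsPM G M) (h𝒞 : IsAltCycleSet G M 𝒞) :
    Disjoint (edgeVerts (sd T₁.C T₁.S.C')) (edgeVerts (sd T₂.C T₂.S.C')) := by
  obtain ⟨C₁, hC₁, S₁⟩ := T₁
  obtain ⟨C₂, hC₂, S₂⟩ := T₂
  rcases h with hne | ⟨heq, h⟩
  · exact (h𝒞.2 hC₁ hC₂ hne).mono (edgeVerts_sd_subset S₁.edgeVerts_subset)
      (edgeVerts_sd_subset S₂.edgeVerts_subset)
  · obtain rfl : C₁ = C₂ := heq
    exact h.disjoint_edgeVerts hM (h𝒞.1 _ hC₁)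

/-- The sets of edges to be exchanged in order to carry out the skips of `L` and to remove the
cycles of `D`. -/
noncomputable def switches (L : List (SkipOn G red M 𝒞)) (D : Finset (Finset (Sym2 V))) :
    List (Finset (Sym2 V)) :=
  L.map (fun T => sd T.C T.S.C') ++ D.toList

theorem pairwise_disjoint_switches {L : List (SkipOn G red M 𝒞)} {D : Finset (Finset (Sym2 V))}
    (hM : IsPM G M) (h𝒞 : IsAltCycleSet G M 𝒞) (hL : L.Pairwise SkipOn.Disj) (hD : D ⊆ 𝒞)
    (hLD : ∀ T ∈ L, T.C ∉ D) :
    (switches L D).Pairwise fun Z Z' => Disjoint (edgeVerts Z) (edgeVerts Z') := by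
  refine List.pairwise_append.2 ⟨List.pairwise_map.2 (hL.imp fun h => h.disjoint_edgeVerts hM h𝒞),
    D.nodup_toList.imp_of_mem fun hZ hZ' hne => ?_, fun Z hZ Z' hZ' => ?_⟩
  · exact h𝒞.2 (hD (mem_toList.1 hZ)) (hD (mem_toList.1 hZ')) hne
  · obtain ⟨T, hT, rfl⟩ := List.mem_map.1 hZ
    rw [mem_toList] at hZ'
    exact (h𝒞.2 T.hC (hD hZ') fun h => hLD T hT (h ▸ hZ')).mono_left
      (edgeVerts_sd_subset T.S.edgeVerts_subset)

theorem sum_wSum_switches {L : List (SkipOn G red M 𝒞)} {D : Finset (Finset (Sym2 V))}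
    (hM : IsPM G M) (hN : IsPM G N) (h𝒞 : IsAltCycleSet G M 𝒞) (hsub : ∀ C ∈ 𝒞, C ⊆ sd M N)
    (hD : D ⊆ 𝒞) :
    ((switches L D).map (wSum red N)).sum =
      (L.map fun T => T.S.w).sum - ∑ C ∈ D, wSum red M C := by
  have hskips : L.map (wSum red N ∘ fun T => sd T.C T.S.C') = L.map fun T => T.S.w :=
    List.map_congr_left fun T _ =>
      (h𝒞.1 _ T.hC).wSum_sd_sd hM hN (hsub _ T.hC) T.S.edgeVerts_subset
  have hcycles : ∑ C ∈ D, wSum red N C = -∑ C ∈ D, wSum red M C := by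
    rw [← sum_neg_distrib]
    refine sum_congr rfl fun C hC => ?_
    rw [wSum, wSum, ← sum_neg_distrib]
    exact sum_congr rfl fun e he => wt_eq_neg_of_mem_sd (hsub C (hD hC) he)
  rw [switches, List.map_append, List.sum_append, List.map_map, hskips, sum_map_toList, hcycles,
    sub_eq_add_neg]

theorem HasZeroSkipCycleSet.exists_isPM_card_sd_lt (h : HasZeroSkipCycleSet G red M 𝒞)
    (hM : IsPM G M) (hN : IsPM G N) (h𝒞 : IsAltCycleSet G M 𝒞) (hsub : ∀ C ∈ 𝒞, C ⊆ sd M N) :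
    ∃ N', IsPM G N' ∧ redCount red N' = redCount red N ∧ #(sd M N') < #(sd M N) := by
  obtain ⟨L, D, hD, hne, hL, hLD, hw⟩ := h
  have hswitch {Z : Finset (Sym2 V)} (hZ : Z ∈ switches L D) :
      IsPM G (sd N Z) ∧ #(sd (sd M N) Z) < #(sd M N) := by
    rcases List.mem_append.1 hZ with hZ | hZ
    · obtain ⟨T, -, rfl⟩ := List.mem_map.1 hZ
      exact ⟨(h𝒞.1 _ T.hC).isPM_sd_sd hM hN (hsub _ T.hC) (T.S.halt.isPM_sd hM)
        T.S.edgeVerts_subset, card_sd_sd_lt (hsub _ T.hC) T.S.hsmall⟩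
    · have hZ := hD (mem_toList.1 hZ)
      have := card_sd_sd_lt (hsub Z hZ) (C' := ∅) (card_pos.2 (h𝒞.1 _ hZ).nonempty)
      rw [sd_empty] at this
      exact ⟨(h𝒞.1 _ hZ).isPM_sd_of_subset_sd hM hN (hsub Z hZ), this⟩
  obtain ⟨U, hU, -, hφ⟩ := exists_isPM_sd_of_pairwise_disjoint hN (fun Z hZ => (hswitch hZ).1)
    (pairwise_disjoint_switches hM h𝒞 hL hD hLD)
  have hred : wSum red N U = 0 := (hφ _).trans ((sum_wSum_switches hM hN h𝒞 hsub hD).trans hw)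
  have hnil : switches L D ≠ [] := by
    simpa [switches, or_iff_not_imp_left, nonempty_iff_ne_empty] using hne
  have hcard : wSum (fun _ => true) (sd M N) U < 0 := by
    refine (hφ _).trans_lt ?_
    refine (List.sum_lt_sum_of_ne_nil hnil _ (fun _ => 0) fun Z hZ => ?_).trans_eq (by simp)
    have := redCount_sd (fun _ => true) (sd M N) Z
    rw [redCount_true, redCount_true] at this
    have := (hswitch hZ).2
    change wSum (fun _ => true) (sd M N) Z < 0
    omega
  refine ⟨sd N U, hU, ?_, ?_⟩
  · have := redCount_sd red N U
    omega
  · have := redCount_sd (fun _ => true) (sd M N) U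
    rw [redCount_true, redCount_true, sd_assoc] at this
    omega

end Switching

section MPath

variable {V : Type*} [DecidableEq V] {G : SimpleGraph V} {M : Finset (Sym2 V)} {u v w x : V}

theorem altList_iff {l : List (Sym2 V)} :
    altList M l ↔ l.IsChain fun e f => ¬(e ∈ M ↔ f ∈ M) := Iff.rfl

/-- An `M`-alternating path whose first and last edges belong to `M`. -/
structure IsMPath (M : Finset (Sym2 V)) (p : G.Walk u v) : Prop where
  isPath : p.IsPath
  altList_edges : altList M p.edges
  head_mem : ∃ e ∈ p.edges.head?, e ∈ M
  getLast_mem : ∃ e ∈ p.edges.getLast?, e ∈ M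

namespace IsMPath

theorem toWalk (h : G.Adj u v) (hM : s(u, v) ∈ M) : IsMPath M h.toWalk where
  isPath := by simp [h.ne]
  altList_edges := by simp [altList_iff]
  head_mem := by simpa
  getLast_mem := by simpa

theorem reverse {p : G.Walk u v} (hp : IsMPath M p) : IsMPath M p.reverse where
  isPath := hp.isPath.reverse
  altList_edges := by
    rw [altList_iff, SimpleGraph.Walk.edges_reverse, List.isChain_reverse]
    exact hp.altList_edges.imp fun e f h => fun h' => h h'.symm
  head_mem := by simpa using hp.getLast_mem
  getLast_mem := by simpa using hp.head_mem

theorem append_cons {p : G.Walk u v} {q : G.Walk w x} (hp : IsMPath M p) (hq : IsMPath M q)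
    (h : G.Adj v w) (hM : s(v, w) ∉ M) (hdisj : p.support.Disjoint q.support) :
    IsMPath M (p.append (.cons h q)) where
  isPath := by
    rw [SimpleGraph.Walk.isPath_def, SimpleGraph.Walk.support_append,
      SimpleGraph.Walk.support_cons, List.tail_cons]
    exact hp.isPath.support_nodup.append hq.isPath.support_nodup hdisj
  altList_edges := by
    obtain ⟨e, he, heM⟩ := hp.getLast_mem
    obtain ⟨f, hf, hfM⟩ := hq.head_mem
    rw [altList_iff, SimpleGraph.Walk.edges_append, SimpleGraph.Walk.edges_cons,
      List.isChain_append, List.isChain_cons]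
    refine ⟨hp.altList_edges, ⟨fun f' hf' => ?_, hq.altList_edges⟩, fun e' he' f' hf' => ?_⟩
    · rw [Option.mem_unique hf' hf]; tauto
    · rw [Option.mem_unique he' he, ← Option.mem_some.1 hf']; tauto
  head_mem := by
    obtain ⟨e, he, heM⟩ := hp.head_mem
    rw [SimpleGraph.Walk.edges_append]
    exact ⟨e, List.mem_head?_append_of_mem_head? he, heM⟩
  getLast_mem := by
    obtain ⟨e, he, heM⟩ := hq.getLast_mem
    refine ⟨e, ?_, heM⟩
    rw [SimpleGraph.Walk.edges_append, SimpleGraph.Walk.edges_cons]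
    exact List.mem_getLast?_append_of_mem_getLast? (List.mem_getLast?_cons he)

theorem isAltPath {p : G.Walk u v} (hp : IsMPath M p) : IsAltPath G M p.edges.toFinset :=
  ⟨u, v, p, hp.isPath, rfl, hp.altList_edges⟩

theorem notMem_edges {p : G.Walk u v} (hp : IsMPath M p) (hM : s(v, u) ∉ M) :
    s(v, u) ∉ p.edges := by
  obtain ⟨hpath, -, ⟨e, he, heM⟩, -⟩ := hp
  cases p with
  | nil => simp
  | cons h q =>
    rw [SimpleGraph.Walk.edges_cons, List.head?_cons, Option.mem_some] at he
    rw [SimpleGraph.Walk.edges_cons, List.mem_cons, not_or]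
    refine ⟨fun heq => hM (heq ▸ he ▸ heM), fun hmem => ?_⟩
    exact (SimpleGraph.Walk.cons_isPath_iff h q).1 hpath |>.2 (q.snd_mem_support_of_mem_edges hmem)

theorem isAltCycle {p : G.Walk u v} (hp : IsMPath M p) (h : G.Adj v u) (hM : s(v, u) ∉ M) :
    IsAltCycle G M (insert s(v, u) p.edges.toFinset) := by
  refine ⟨v, .cons h p, (SimpleGraph.Walk.cons_isCycle_iff p h).2 ⟨hp.isPath, hp.notMem_edges hM⟩,
    by simp, ?_⟩
  obtain ⟨e, he, heM⟩ := hp.getLast_mem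
  obtain ⟨f, hf, hfM⟩ := hp.head_mem
  rw [SimpleGraph.Walk.edges_cons, List.take_one, List.head?_cons, Option.toList_some,
    altList_iff, List.cons_append, List.isChain_cons, List.isChain_append]
  refine ⟨fun f' hf' => ?_, hp.altList_edges, by simp, fun e' he' f' hf' => ?_⟩
  · rw [Option.mem_unique hf' (List.mem_head?_append_of_mem_head? hf)]; tauto
  · rw [Option.mem_unique he' he, ← Option.mem_some.1 hf']; tauto

theorem sum_insert_edges {p : G.Walk u v} (hp : IsMPath M p) (hM : s(v, u) ∉ M)
    (g : Sym2 V → ℤ) :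
    ∑ e ∈ insert s(v, u) p.edges.toFinset, g e = g s(v, u) + (p.edges.map g).sum := by
  rw [sum_insert (List.mem_toFinset.not.2 (hp.notMem_edges hM)),
    List.sum_toFinset g hp.isPath.isTrail.edges_nodup]

end IsMPath

end MPath

/-! ### Traced alternating cycles -/

/-- A parametrisation `a 0, b 0, a 1, b 1, …, b (n - 1), a n = a 0` of the `M`-alternating cycle
`C` in which the edges from `a i` to `b i` are the ones in `M`. The sequences are indexed by all of
`ℕ` and may be thought of as running around the cycle periodically. -/
structure AltTrace {V : Type*} (G : SimpleGraph V) (M C : Finset (Sym2 V)) where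
  n : ℕ
  a : ℕ → V
  b : ℕ → V
  two_le : 2 ≤ n
  a_n : a n = a 0
  injOn_a : Set.InjOn a (Set.Iio n)
  injOn_b : Set.InjOn b (Set.Iio n)
  a_ne_b : ∀ i j, a i ≠ b j
  adj_ab : ∀ i, G.Adj (a i) (b i)
  adj_ba : ∀ i, G.Adj (b i) (a (i + 1))
  mem : ∀ i, s(a i, b i) ∈ M
  notMem : ∀ i, s(b i, a (i + 1)) ∉ M
  mem_C_iff : ∀ e, e ∈ C ↔ ∃ i < n, e = s(a i, b i) ∨ e = s(b i, a (i + 1))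

namespace AltTrace

variable {V : Type*} {G : SimpleGraph V} {M C : Finset (Sym2 V)} (T : AltTrace G M C)
  {i j k l m r s : ℕ}

/-- The total `g`-value of the first `2 * k` edges of the cycle. -/
def height (g : Sym2 V → ℤ) (k : ℕ) : ℤ :=
  ∑ j ∈ range k, (g s(T.a j, T.b j) + g s(T.b j, T.a (j + 1)))

/-- The total `g`-value of the path from `b i` to `a j` along the cycle. -/
def linkHeight (g : Sym2 V → ℤ) (i j : ℕ) : ℤ :=
  T.height g j - T.height g i - g s(T.a i, T.b i)

theorem height_zero (g : Sym2 V → ℤ) : T.height g 0 = 0 := rfl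

theorem height_succ (g : Sym2 V → ℤ) (k : ℕ) :
    T.height g (k + 1) = T.height g k + (g s(T.a k, T.b k) + g s(T.b k, T.a (k + 1))) :=
  sum_range_succ _ _

theorem height_const (c : ℤ) (k : ℕ) : T.height (fun _ => c) k = 2 * k * c := by
  simp [height]; ring

theorem link_last : s(T.b (T.n - 1), T.a 0) = s(T.b (T.n - 1), T.a (T.n - 1 + 1)) := by
  rw [Nat.sub_add_cancel (Nat.one_le_of_lt T.two_le), T.a_n]

theorem adj_last : G.Adj (T.b (T.n - 1)) (T.a 0) := by
  simpa only [← SimpleGraph.mem_edgeSet, T.link_last] using T.adj_ba (T.n - 1)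

theorem notMem_last : s(T.b (T.n - 1), T.a 0) ∉ M := by
  rw [T.link_last]
  exact T.notMem _

theorem height_n (g : Sym2 V → ℤ) : T.height g T.n = T.height g (T.n - 1) +
    (g s(T.a (T.n - 1), T.b (T.n - 1)) + g s(T.b (T.n - 1), T.a 0)) := by
  rw [T.link_last, ← T.height_succ, Nat.sub_add_cancel (Nat.one_le_of_lt T.two_le)]

theorem a_ne_a (hrs : r < s) (hs : s < T.n) : T.a r ≠ T.a s :=
  fun h => hrs.ne (T.injOn_a (hrs.trans hs) hs h)

theorem b_ne_b (hrs : r < s) (hs : s < T.n) : T.b r ≠ T.b s :=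
  fun h => hrs.ne (T.injOn_b (hrs.trans hs) hs h)

theorem mk_a_a_notMem_C : s(T.a i, T.a j) ∉ C := by
  simp [T.mem_C_iff, T.a_ne_b]

theorem mk_b_b_notMem_C : s(T.b i, T.b j) ∉ C := by
  simp [T.mem_C_iff, (T.a_ne_b _ _).symm]

section DecidableEq

variable [DecidableEq V]

theorem mk_a_a_notMem (hM : IsPM G M) : s(T.a i, T.a j) ∉ M := fun h => by
  have := hM.eq_of_mem h (T.mem i) (Sym2.mem_mk_left ..) (Sym2.mem_mk_left ..)
  simp [T.a_ne_b] at this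

theorem mk_b_b_notMem (hM : IsPM G M) : s(T.b i, T.b j) ∉ M := fun h => by
  have := hM.eq_of_mem h (T.mem i) (Sym2.mem_mk_left ..) (Sym2.mem_mk_right ..)
  simp [(T.a_ne_b _ _).symm] at this

/-- The edges of the stretch of the cycle from `a i` to `b k`. -/
def segment (i k : ℕ) : Finset (Sym2 V) :=
  (Icc i k).image (fun r => s(T.a r, T.b r)) ∪ (Ico i k).image fun r => s(T.b r, T.a (r + 1))

theorem mem_segment {e : Sym2 V} : e ∈ T.segment i k ↔
    (∃ r, i ≤ r ∧ r ≤ k ∧ e = s(T.a r, T.b r)) ∨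
      ∃ r, i ≤ r ∧ r < k ∧ e = s(T.b r, T.a (r + 1)) := by
  simp only [segment, mem_union, mem_image, mem_Icc, mem_Ico, and_assoc, eq_comm]

theorem segment_self (i : ℕ) : T.segment i i = {s(T.a i, T.b i)} := by
  simp [segment]

theorem segment_succ (hik : i ≤ k) : T.segment i (k + 1) =
    insert s(T.b k, T.a (k + 1)) (insert s(T.a (k + 1), T.b (k + 1)) (T.segment i k)) := by
  ext e
  simp only [mem_insert, mem_segment]
  grind

theorem segment_subset (hk : k < T.n) : T.segment i k ⊆ C := by
  intro e he
  rcases T.mem_segment.1 he with ⟨r, -, hr, rfl⟩ | ⟨r, -, hr, rfl⟩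
  exacts [(T.mem_C_iff _).2 ⟨r, by omega, .inl rfl⟩, (T.mem_C_iff _).2 ⟨r, by omega, .inr rfl⟩]

theorem segment_mono (hi : j ≤ i) (hk : k ≤ l) : T.segment i k ⊆ T.segment j l :=
  union_subset_union (image_subset_image (Icc_subset_Icc hi hk))
    (image_subset_image (Ico_subset_Ico hi hk))

theorem disjoint_segment (hkj : k < j) (hl : l < T.n) :
    Disjoint (T.segment i k) (T.segment j l) := by
  refine Finset.disjoint_left.2 fun e he he' => ?_
  rcases T.mem_segment.1 he with ⟨r, -, hr, rfl⟩ | ⟨r, -, hr, rfl⟩ <;>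
    rcases T.mem_segment.1 he' with ⟨s, hs, hs', h⟩ | ⟨s, hs, hs', h⟩ <;>
    simp only [Sym2.eq_iff, T.a_ne_b, (T.a_ne_b _ _).symm, and_false, or_false,
      false_or] at h
  · exact T.a_ne_a (by omega) (by omega) h.1
  · exact T.b_ne_b (by omega) (by omega) h.2
  · exact T.b_ne_b (by omega) (by omega) h.1
  · exact T.b_ne_b (by omega) (by omega) h.1

theorem exists_walk_segment (hik : i ≤ k) (hk : k < T.n) :
    ∃ p : G.Walk (T.a i) (T.b k), IsMPath M p ∧ p.edges.toFinset = T.segment i k ∧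
      (∀ v ∈ p.support, ∃ r, i ≤ r ∧ r ≤ k ∧ (v = T.a r ∨ v = T.b r)) ∧
      ∀ g : Sym2 V → ℤ, (p.edges.map g).sum =
        T.height g k - T.height g i + g s(T.a k, T.b k) := by
  induction k, hik using Nat.le_induction with
  | base =>
    exact ⟨(T.adj_ab i).toWalk, .toWalk _ (T.mem i), by simp [T.segment_self],
      fun v hv => ⟨i, le_rfl, le_rfl, by simpa using hv⟩, by simp⟩
  | succ k hik ih =>
    obtain ⟨p, hp, hedges, hsupp, hsum⟩ := ih (by omega)
    refine ⟨p.append (.cons (T.adj_ba k) (T.adj_ab (k + 1)).toWalk),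
      hp.append_cons (.toWalk _ (T.mem _)) _ (T.notMem k) fun v hv hv' => ?_, ?_, ?_, fun g => ?_⟩
    · obtain ⟨r, -, hr, hvr⟩ := hsupp v hv
      have ha := T.a_ne_a (show r < k + 1 by omega) hk
      have hb := T.b_ne_b (show r < k + 1 by omega) hk
      rcases hvr with rfl | rfl <;> simp_all [T.a_ne_b, (T.a_ne_b _ _).symm]
    · rw [SimpleGraph.Walk.edges_append, List.toFinset_append, hedges]
      simp [T.segment_succ hik]
    · intro v hv
      rw [SimpleGraph.Walk.support_append, SimpleGraph.Walk.support_cons, List.tail_cons,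
        List.mem_append] at hv
      rcases hv with hv | hv
      · obtain ⟨r, hir, hrk, hvr⟩ := hsupp v hv
        exact ⟨r, hir, by omega, hvr⟩
      · exact ⟨k + 1, by omega, le_rfl, by simpa using hv⟩
    · rw [SimpleGraph.Walk.edges_append, List.map_append, List.sum_append, hsum, T.height_succ]
      simp
      ring

theorem C_eq_insert : C = insert s(T.b (T.n - 1), T.a 0) (T.segment 0 (T.n - 1)) := by
  have := T.two_le
  ext e
  rw [T.link_last, mem_insert, T.mem_C_iff, mem_segment]
  constructor
  · rintro ⟨r, hr, h | h⟩
    · exact .inr (.inl ⟨r, by omega, by omega, h⟩)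
    · rcases Nat.lt_or_ge r (T.n - 1) with hr' | hr'
      · exact .inr (.inr ⟨r, by omega, hr', h⟩)
      · obtain rfl : r = T.n - 1 := by omega
        exact .inl h
  · rintro (h | ⟨r, -, hr, h⟩ | ⟨r, -, hr, h⟩)
    exacts [⟨_, by omega, .inr h⟩, ⟨r, by omega, .inl h⟩, ⟨r, by omega, .inr h⟩]

theorem isAltCycle (T : AltTrace G M C) : IsAltCycle G M C := by
  obtain ⟨p, hp, hedges, -, -⟩ := T.exists_walk_segment (Nat.zero_le (T.n - 1))
    (Nat.sub_one_lt_of_lt T.two_le)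
  rw [T.C_eq_insert, ← hedges]
  exact hp.isAltCycle T.adj_last T.notMem_last

theorem isAltPath_segment (hik : i ≤ k) (hk : k < T.n) : IsAltPath G M (T.segment i k) := by
  obtain ⟨p, hp, hedges, -⟩ := T.exists_walk_segment hik hk
  exact hedges ▸ hp.isAltPath

end DecidableEq

theorem sum_C (g : Sym2 V → ℤ) : ∑ e ∈ C, g e = T.height g T.n := by
  classical
  obtain ⟨p, hp, hedges, -, hsum⟩ := T.exists_walk_segment (Nat.zero_le (T.n - 1))
    (Nat.sub_one_lt_of_lt T.two_le)
  calc ∑ e ∈ C, g e = ∑ e ∈ insert s(T.b (T.n - 1), T.a 0) p.edges.toFinset, g e :=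
        congrArg (fun F => ∑ e ∈ F, g e) (hedges ▸ T.C_eq_insert)
    _ = T.height g T.n := by
        rw [hp.sum_insert_edges T.notMem_last, hsum, T.height_n]
        rw [height_zero]
        ring

variable [DecidableEq V]

/-- The cycle obtained from `C` by replacing the paths from `b i` to `a j` and from `b l` to `a m`
by the chords joining `b i` to `b l` and `a j` to `a m`. -/
def bypass (i j l m : ℕ) : Finset (Sym2 V) :=
  insert s(T.b (T.n - 1), T.a 0) (T.segment 0 i ∪ insert s(T.b i, T.b l)
    (T.segment j l ∪ insert s(T.a j, T.a m) (T.segment m (T.n - 1))))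

theorem isAltCycle_bypass_and_sum_bypass (hM : IsPM G M) (hij : i < j) (hjl : j ≤ l) (hlm : l < m)
    (hm : m < T.n) (hb : G.Adj (T.b i) (T.b l)) (ha : G.Adj (T.a j) (T.a m)) :
    IsAltCycle G M (T.bypass i j l m) ∧ ∀ g : Sym2 V → ℤ, ∑ e ∈ T.bypass i j l m, g e =
      ∑ e ∈ C, g e + (g s(T.b i, T.b l) + g s(T.a j, T.a m)
        - T.linkHeight g i j - T.linkHeight g l m) := by
  suffices ∃ C', IsAltCycle G M C' ∧ C' = T.bypass i j l m ∧ ∀ g : Sym2 V → ℤ,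
      ∑ e ∈ C', g e = ∑ e ∈ C, g e + (g s(T.b i, T.b l) + g s(T.a j, T.a m)
        - T.linkHeight g i j - T.linkHeight g l m) by
    obtain ⟨_, hcycle, rfl, hsum⟩ := this
    exact ⟨hcycle, hsum⟩
  obtain ⟨p, hp, hpe, hps, hpw⟩ := T.exists_walk_segment (k := i) (Nat.zero_le i) (by omega)
  obtain ⟨q, hq, hqe, hqs, hqw⟩ := T.exists_walk_segment hjl (by omega)
  obtain ⟨r, hr, hre, hrs, hrw⟩ := T.exists_walk_segment (Nat.le_sub_one_of_lt hm) (by omega)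
  have hdisj {s t : ℕ} {v : V} (hst : s < t) (ht : t < T.n) (hs : v = T.a s ∨ v = T.b s) :
      ¬(v = T.a t ∨ v = T.b t) := by
    have := T.a_ne_a hst ht
    have := T.b_ne_b hst ht
    rcases hs with rfl | rfl <;> simp_all [T.a_ne_b, (T.a_ne_b _ _).symm]
  have hqr := hq.reverse.append_cons hr ha (T.mk_a_a_notMem hM) fun v hv hv' => by
    obtain ⟨s, -, hs', hvs⟩ := hqs v (by simpa using hv)
    obtain ⟨t, ht, ht', hvt⟩ := hrs v hv'
    exact hdisj (by omega) (by omega) hvs hvt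
  have hpqr := hp.append_cons hqr hb (T.mk_b_b_notMem hM) fun v hv hv' => by
    obtain ⟨s, -, hs', hvs⟩ := hps v hv
    rw [SimpleGraph.Walk.support_append, SimpleGraph.Walk.support_cons, List.tail_cons,
      List.mem_append, SimpleGraph.Walk.support_reverse, List.mem_reverse] at hv'
    rcases hv' with hv' | hv'
    · obtain ⟨t, ht, ht', hvt⟩ := hqs v hv'
      exact hdisj (by omega) (by omega) hvs hvt
    · obtain ⟨t, ht, ht', hvt⟩ := hrs v hv'
      exact hdisj (by omega) (by omega) hvs hvt
  refine ⟨_, hpqr.isAltCycle T.adj_last T.notMem_last, ?_, fun g => ?_⟩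
  · simp [bypass, ← hpe, ← hqe, ← hre]
  · rw [hpqr.sum_insert_edges T.notMem_last, T.sum_C, T.height_n]
    simp [hpw, hqw, hrw, height_zero, linkHeight, List.sum_reverse]
    ring

theorem bypass_sdiff_subset (hi : i < T.n) (hl : l < T.n) :
    T.bypass i j l m \ {s(T.b i, T.b l), s(T.a j, T.a m)} ⊆ C := by
  have h0 : T.segment 0 i ⊆ C := T.segment_subset hi
  have h1 : T.segment j l ⊆ C := T.segment_subset hl
  have h2 : T.segment m (T.n - 1) ⊆ C := T.segment_subset (by omega)
  have h3 : s(T.b (T.n - 1), T.a 0) ∈ C := T.C_eq_insert.superset (mem_insert_self ..)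
  grind [bypass]

theorem sdiff_bypass_subset_segment : C \ T.bypass i j l m ⊆ T.segment i m := by
  intro e he
  rw [mem_sdiff, bypass, T.link_last, T.mem_C_iff] at he
  simp only [mem_insert, mem_union, mem_segment] at he ⊢
  obtain ⟨⟨r, hr, h | h⟩, hnot⟩ := he
  · exact .inl ⟨r, by grind⟩
  · exact .inr ⟨r, by grind⟩

theorem exists_skip (hM : IsPM G M) {red : Sym2 V → Bool} (hij : i < j) (hjl : j ≤ l)
    (hlm : l < m) (hm : m < T.n) (hlong : i + 2 ≤ j ∨ l + 2 ≤ m) (hb : G.Adj (T.b i) (T.b l))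
    (ha : G.Adj (T.a j) (T.a m)) {w : ℤ}
    (hw : w = wt red M s(T.b i, T.b l) + wt red M s(T.a j, T.a m)
      - T.linkHeight (wt red M) i j - T.linkHeight (wt red M) l m)
    (hw4 : |w| ≤ 4) :
    ∃ S : Skip G red M C, S.w = w ∧ S.In (T.segment i m) := by
  obtain ⟨hcycle, hsum⟩ := T.isAltCycle_bypass_and_sum_bypass hM hij hjl hlm hm hb ha
  have hweight : wSum red M (T.bypass i j l m) - wSum red M C = w := by
    rw [wSum, wSum, hsum, hw]
    ring
  have hcard : #(T.bypass i j l m) < #C := by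
    have := hsum fun _ => 1
    simp only [linkHeight, height_const, sum_const, nsmul_one] at this
    omega
  exact ⟨{
    e1 := s(T.b i, T.b l)
    e2 := s(T.a j, T.a m)
    C' := T.bypass i j l m
    hne := by simp [(T.a_ne_b _ _).symm]
    he1G := hb
    he2G := ha
    he1M := T.mk_b_b_notMem hM
    he2M := T.mk_a_a_notMem hM
    he1C := T.mk_b_b_notMem_C
    he2C := T.mk_a_a_notMem_C
    halt := hcycle
    hmem1 := by simp [bypass]
    hmem2 := by simp [bypass]
    hsub := T.bypass_sdiff_subset (by omega) (by omega)
    hsmall := hcard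
    hwbound := hweight ▸ hw4 }, hweight, T.sdiff_bypass_subset_segment⟩

end AltTrace

theorem iterate_comp_ne_of_involutive {V : Type*} {μ ν : V → V} (hμ : μ.Involutive)
    (hν : ν.Involutive) (hμv : ∀ v, μ v ≠ v) (hνv : ∀ v, ν v ≠ v) (v : V) (i j : ℕ) :
    (ν ∘ μ)^[i] v ≠ μ ((ν ∘ μ)^[j] v) := by
  have hstep (i : ℕ) : (ν ∘ μ)^[i + 1] v = ν (μ ((ν ∘ μ)^[i] v)) :=
    Function.iterate_succ_apply' ..
  have hle (d : ℕ) : ∀ i, (ν ∘ μ)^[i] v ≠ μ ((ν ∘ μ)^[i + d] v) := by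
    induction d using Nat.twoStepInduction with
    | zero => exact fun i => (hμv _).symm
    | one =>
      intro i h
      rw [hstep, ← hμ.eq_iff] at h
      exact hνv _ h.symm
    | more d ih _ =>
      intro i h
      rw [show i + (d + 2) = i + 1 + d + 1 by omega, hstep, ← hμ.eq_iff, ← hν.eq_iff,
        ← hstep] at h
      exact ih (i + 1) h
  rcases Nat.le_total i j with hij | hji
  · obtain ⟨d, rfl⟩ := Nat.exists_eq_add_of_le hij
    exact hle d i
  · obtain ⟨d, rfl⟩ := Nat.exists_eq_add_of_le hji
    exact fun h => hle d j (hμ.eq_iff.1 h.symm)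

section Decomposition

variable {V : Type*} [DecidableEq V] {G : SimpleGraph V} {M N : Finset (Sym2 V)}

theorem IsPM.exists_mate (hM : IsPM G M) :
    ∃ μ : V → V, μ.Involutive ∧ (∀ v, G.Adj v (μ v)) ∧ ∀ v w, s(v, w) ∈ M ↔ w = μ v := by
  have hmate (v : V) : ∃ w, s(v, w) ∈ M := by
    obtain ⟨e, ⟨he, hve⟩, -⟩ := hM.2 v
    obtain ⟨w, rfl⟩ := Sym2.mem_iff_exists.1 hve
    exact ⟨w, he⟩
  choose μ hμ using hmate
  have huniq {v w : V} (h : s(v, w) ∈ M) : w = μ v :=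
    Sym2.congr_right.1 (hM.eq_of_mem h (hμ v) (Sym2.mem_mk_left ..) (Sym2.mem_mk_left ..))
  exact ⟨μ, fun v => (huniq (Sym2.eq_swap ▸ hμ v)).symm, fun v => hM.1 (hμ v),
    fun v w => ⟨huniq, fun h => h ▸ hμ v⟩⟩

theorem exists_altTrace_subset_sd [Finite V] (hM : IsPM G M) (hN : IsPM G N)
    (hne : (sd M N).Nonempty) : ∃ C ⊆ sd M N, Nonempty (AltTrace G M C) := by
  obtain ⟨μ, hμ, hμG, hμM⟩ := hM.exists_mate
  obtain ⟨ν, hν, hνG, hνN⟩ := hN.exists_mate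
  obtain ⟨v, hv⟩ : ∃ v, μ v ≠ ν v := by
    obtain ⟨e, he⟩ := hne
    induction e with | _ v w
    rw [mem_sd, hμM, hνN] at he
    exact ⟨v, by grind⟩
  have hinj : (ν ∘ μ).Injective := hν.injective.comp hμ.injective
  set n := Function.minimalPeriod (ν ∘ μ) v
  set a : ℕ → V := fun i => (ν ∘ μ)^[i] v
  have ha (i : ℕ) : a (i + 1) = ν (μ (a i)) := Function.iterate_succ_apply' ..
  have hfix : ν (μ v) ≠ v := fun h => hv (hν.eq_iff.1 h)
  have ha' (i : ℕ) : a (i + 1) ≠ a i := fun h =>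
    hfix (hinj.iterate i (by simpa [a, Function.iterate_succ_apply] using h))
  have hn0 : 0 < n := Function.minimalPeriod_pos_of_mem_periodicPts (hinj.mem_periodicPts v)
  have hn1 : n ≠ 1 := mt Function.minimalPeriod_eq_one_iff_isFixedPt.1 hfix
  have han : a n = a 0 := Function.iterate_minimalPeriod
  have hinjOn : Set.InjOn a (Set.Iio n) := Function.iterate_injOn_Iio_minimalPeriod
  have hab (i j : ℕ) : a i ≠ μ (a j) := iterate_comp_ne_of_involutive hμ hν
    (fun v => (hμG v).ne') (fun v => (hνG v).ne') v i j
  have hM_ab (i : ℕ) : s(a i, μ (a i)) ∈ M := (hμM _ _).2 rfl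
  have hN_ba (i : ℕ) : s(μ (a i), a (i + 1)) ∈ N := (hνN _ _).2 (ha i)
  have hN_ab (i : ℕ) : s(a i, μ (a i)) ∉ N := fun h =>
    ha' i (by rw [ha, (hνN _ _).1 h, hν])
  have hM_ba (i : ℕ) : s(μ (a i), a (i + 1)) ∉ M := fun h =>
    ha' i (by rw [(hμM _ _).1 h, hμ])
  refine ⟨(range n).image (fun i => s(a i, μ (a i))) ∪
    (range n).image fun i => s(μ (a i), a (i + 1)), ?_, ⟨{
      n, a
      b := fun i => μ (a i)
      two_le := by omega
      a_n := han
      injOn_a := hinjOn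
      injOn_b := hμ.injective.comp_injOn hinjOn
      a_ne_b := hab
      adj_ab := fun i => hμG _
      adj_ba := fun i => hN.1 (hN_ba i)
      mem := hM_ab
      notMem := hM_ba
      mem_C_iff := by simp [and_or_left, exists_or, eq_comm] }⟩⟩
  simp only [union_subset_iff, image_subset_iff, mem_sd]
  exact ⟨fun i _ => .inl ⟨hM_ab i, hN_ab i⟩, fun i _ => .inr ⟨hN_ba i, hM_ba i⟩⟩

theorem exists_altTrace_decomposition [Finite V] (hM : IsPM G M) (hN : IsPM G N) :
    ∃ 𝒞 : Finset (Finset (Sym2 V)), IsAltCycleSet G M 𝒞 ∧ 𝒞.biUnion id = sd M N ∧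
      ∀ C ∈ 𝒞, Nonempty (AltTrace G M C) := by
  induction hcard : #(sd M N) using Nat.strong_induction_on generalizing N with | _ m ih
  rcases (sd M N).eq_empty_or_nonempty with hempty | hne
  · exact ⟨∅, by simp [IsAltCycleSet], by simp [hempty], by simp⟩
  obtain ⟨C, hsub, ⟨T⟩⟩ := exists_altTrace_subset_sd hM hN hne
  have hC := T.isAltCycle
  have hrest : sd M (sd N C) = sd M N \ C := by
    rw [← sd_assoc]
    ext e
    have := @hsub e
    grind [mem_sd]
  have hN' : IsPM G (sd N C) := hC.isPM_sd_of_subset_sd hM hN hsub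
  obtain ⟨𝒞, h𝒞, hunion, htrace⟩ := ih _ (by
    rw [hrest, ← hcard, ← card_sdiff_add_card_eq_card hsub]
    exact Nat.lt_add_of_pos_right hC.nonempty.card_pos) hN' rfl
  have hdisj {D : Finset (Sym2 V)} (hD : D ∈ 𝒞) : Disjoint (edgeVerts C) (edgeVerts D) := by
    refine Set.disjoint_left.2 fun v hv ⟨e, heD, hve⟩ => ?_
    have he := hunion ▸ mem_biUnion.2 ⟨D, hD, heD⟩
    rw [hrest, mem_sdiff, ← hC.mem_iff_mem_sd hM hN hsub hv hve] at he
    exact he.2 he.1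
  refine ⟨insert C 𝒞, ⟨?_, ?_⟩, ?_, ?_⟩
  · simpa using ⟨hC, h𝒞.1⟩
  · rw [coe_insert, Set.pairwise_insert]
    exact ⟨h𝒞.2, fun D hD _ => ⟨hdisj hD, (hdisj hD).symm⟩⟩
  · rw [biUnion_insert, hunion, hrest, id, union_sdiff_of_subset hsub]
  · simpa using ⟨⟨T⟩, htrace⟩

end Decomposition

/-! ### Skips of small weight -/

theorem exists_eq_of_succ_le_add_one {f : ℕ → ℤ} (hf : ∀ i, f (i + 1) ≤ f i + 1) {s e : ℕ}
    (hse : s ≤ e) {c : ℤ} (hs : f s ≤ c) (he : c ≤ f e) : ∃ p, s ≤ p ∧ p ≤ e ∧ f p = c := by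
  induction e, hse using Nat.le_induction with
  | base => exact ⟨s, le_rfl, le_rfl, le_antisymm hs he⟩
  | succ e hse ih =>
    rcases lt_or_ge (f e) c with hlt | hge
    · exact ⟨e + 1, by omega, le_rfl, by linarith [hf e]⟩
    · obtain ⟨p, hsp, hpe, hp⟩ := ih hge
      exact ⟨p, hsp, by omega, hp⟩

theorem wt_bounds_of_mem {V : Type*} [DecidableEq V] {M : Finset (Sym2 V)} {e : Sym2 V}
    (red : Sym2 V → Bool) (he : e ∈ M) : -1 ≤ wt red M e ∧ wt red M e ≤ 0 := by
  rw [wt_of_mem he]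
  grind

theorem wt_bounds_of_notMem {V : Type*} [DecidableEq V] {M : Finset (Sym2 V)} {e : Sym2 V}
    (red : Sym2 V → Bool) (he : e ∉ M) : 0 ≤ wt red M e ∧ wt red M e ≤ 1 := by
  rw [wt_of_notMem he]
  grind

namespace AltTrace

variable {V : Type*} [DecidableEq V] {G : SimpleGraph V} {red : Sym2 V → Bool}
  {M C : Finset (Sym2 V)} (T : AltTrace G M C) {s e : ℕ} {ε : ℤ}

theorem abs_height_succ_sub_le (red : Sym2 V → Bool) (i : ℕ) :
    |T.height (wt red M) (i + 1) - T.height (wt red M) i| ≤ 1 := by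
  have := wt_bounds_of_mem red (T.mem i)
  have := wt_bounds_of_notMem red (T.notMem i)
  rw [T.height_succ, abs_le]
  omega

/-- For `ε = 1` the path found here has weight `2`, for `ε = -1` it has weight `-1`; in both cases,
replacing two such paths by two chords of weight `0` or `1` moves the weight by `2` to `4` in the
direction `-ε`. -/
theorem exists_linkHeight_eq (red : Sym2 V → Bool) (hε : ε = 1 ∨ ε = -1) (hse : s ≤ e)
    (hrise : 4 ≤ ε * (T.height (wt red M) e - T.height (wt red M) s)) :
    ∃ p, s + 2 ≤ p ∧ p ≤ e ∧ 2 * T.linkHeight (wt red M) s p = 1 + 3 * ε ∧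
      ε * (T.height (wt red M) p - T.height (wt red M) s) ≤ 2 := by
  unfold linkHeight
  have hs1 := T.height_succ (wt red M) s
  set H := T.height (wt red M)
  have hstep (i : ℕ) : H (i + 1) ≤ H i + 1 ∧ H i ≤ H (i + 1) + 1 := by
    have := abs_le.1 (T.abs_height_succ_sub_le red i)
    constructor <;> linarith
  have hm := wt_bounds_of_mem red (T.mem s)
  have hl := wt_bounds_of_notMem red (T.notMem s)
  have hs2 : H (s + 2) ≤ H (s + 1) + 1 ∧ H (s + 1) ≤ H (s + 2) + 1 := hstep (s + 1)
  have hse' : s + 2 ≤ e := by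
    by_contra! hlt
    obtain rfl | rfl : e = s ∨ e = s + 1 := by omega
    all_goals rcases hε with rfl | rfl <;> omega
  rcases hε with rfl | rfl
  · obtain ⟨p, hsp, hpe, hp⟩ := exists_eq_of_succ_le_add_one (fun i => (hstep i).1) hse'
      (c := H s + wt red M s(T.a s, T.b s) + 2) (by omega) (by omega)
    exact ⟨p, hsp, hpe, by omega, by omega⟩
  · obtain ⟨p, hsp, hpe, hp⟩ := exists_eq_of_succ_le_add_one (f := fun i => -H i)
      (fun i => by have := hstep i; omega) hse'
      (c := -(H s + wt red M s(T.a s, T.b s) - 1)) (by omega) (by omega)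
    exact ⟨p, hsp, hpe, by omega, by omega⟩

theorem exists_strictMono_linkHeight_eq (red : Sym2 V → Bool) (hε : ε = 1 ∨ ε = -1) (hse : s ≤ e)
    (q : ℕ) (hrise : 2 * q + 2 ≤ ε * (T.height (wt red M) e - T.height (wt red M) s)) :
    ∃ p : ℕ → ℕ, StrictMono p ∧ p 0 = s ∧ p q ≤ e ∧
      (∀ k < q, p k + 2 ≤ p (k + 1) ∧ 2 * T.linkHeight (wt red M) (p k) (p (k + 1)) = 1 + 3 * ε) ∧
      ε * (T.height (wt red M) (p q) - T.height (wt red M) s) ≤ 2 * q := by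
  induction q generalizing s with
  | zero => exact ⟨fun k => s + k, add_right_strictMono, rfl, hse, by simp, by simp⟩
  | succ q ih =>
    push_cast at hrise
    obtain ⟨s', hss', hs'e, hlink, hheight⟩ := T.exists_linkHeight_eq red hε hse (by linarith)
    obtain ⟨p, hp, rfl, hpe, hplink, hpheight⟩ := ih hs'e (by linarith)
    refine ⟨fun | 0 => s | k + 1 => p k, strictMono_nat_of_lt_succ ?_, rfl, hpe, ?_, ?_⟩
    · rintro (_ | k)
      exacts [by simpa using by omega, hp k.lt_succ_self]
    · rintro (_ | k) hk
      exacts [⟨hss', hlink⟩, hplink k (by omega)]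
    · push_cast
      linarith

theorem exists_skip_of_linkHeight_eq {R : ℕ} (hM : IsPM G M) (hG : HasTwinCliques G 2 R)
    (hε : ε = 1 ∨ ε = -1) {p : ℕ → ℕ} (hp : StrictMono p) (hpn : p R < T.n)
    (hlink : ∀ k < R, p k + 2 ≤ p (k + 1) ∧
      2 * T.linkHeight (wt red M) (p k) (p (k + 1)) = 1 + 3 * ε) :
    ∃ S : Skip G red M C, S.In (T.segment (p 0) (p R)) ∧ 2 ≤ -ε * S.w ∧ -ε * S.w ≤ 4 := by
  have hn {k : ℕ} (hk : k ≤ R) : p k < T.n := (hp.monotone hk).trans_lt hpn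
  obtain ⟨f, hf, hfR, hadj⟩ := hG (fun k => T.b (p k)) (fun k => T.a (p (k + 1)))
    (T.injOn_b.comp hp.injective.injOn fun k hk => hn (le_of_lt hk))
    (T.injOn_a.comp (hp.injective.comp Nat.succ_injective).injOn fun k hk => hn hk)
  have h01 : f 0 < f 1 := hf Nat.zero_lt_one
  obtain ⟨hb, ha⟩ := hadj 0 1 (by decide)
  obtain ⟨hlong, hlink0⟩ := hlink (f 0) (hfR 0)
  obtain ⟨-, hlink1⟩ := hlink (f 1) (hfR 1)
  have hwb := wt_bounds_of_notMem red (T.mk_b_b_notMem hM (i := p (f 0)) (j := p (f 1)))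
  have hwa := wt_bounds_of_notMem red (T.mk_a_a_notMem hM (i := p (f 0 + 1)) (j := p (f 1 + 1)))
  obtain ⟨w, hw⟩ : ∃ w, w = wt red M s(T.b (p (f 0)), T.b (p (f 1))) +
      wt red M s(T.a (p (f 0 + 1)), T.a (p (f 1 + 1))) -
      T.linkHeight (wt red M) (p (f 0)) (p (f 0 + 1)) -
      T.linkHeight (wt red M) (p (f 1)) (p (f 1 + 1)) := ⟨_, rfl⟩
  have hweight : 2 ≤ -ε * w ∧ -ε * w ≤ 4 := by
    rcases hε with rfl | rfl <;> omega
  obtain ⟨S, rfl, hSin⟩ := T.exists_skip hM (by omega) (hp.monotone (by omega)) (hp (by omega))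
    (hn (hfR 1)) (.inl hlong) hb ha hw (by rw [abs_le]; rcases hε with rfl | rfl <;> omega)
  exact ⟨S, hSin.trans (T.segment_mono (hp.monotone (Nat.zero_le _)) (hp.monotone (hfR 1))),
    hweight⟩

end AltTrace

section SkipFamilies

variable {V : Type*} [DecidableEq V] {G : SimpleGraph V} {red : Sym2 V → Bool}
  {M C : Finset (Sym2 V)} {𝒞 : Finset (Finset (Sym2 V))}

theorem SkipOn.Disj.symm {S S' : SkipOn G red M 𝒞} (h : S.Disj S') : S'.Disj S := by
  obtain ⟨C, hC, S⟩ := S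
  obtain ⟨C', hC', S'⟩ := S'
  rcases h with h | ⟨h, P, P', hP, hP', hdisj, hPalt, hPalt', hS, hS'⟩
  · exact .inl h.symm
  · obtain rfl : C = C' := h
    exact .inr ⟨rfl, P', P, hP', hP, hdisj.symm, hPalt', hPalt, hS', hS⟩

theorem SkipOn.Disj.ne {S S' : SkipOn G red M 𝒞} (h : S.Disj S') : S ≠ S' := by
  rintro rfl
  rcases h with h | ⟨_, P, P', -, -, hdisj, -, -, hS, hS'⟩
  · exact h rfl
  · have hempty : S.C \ S.S.C' = ∅ := disjoint_self.1 (hdisj.mono hS hS')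
    exact (card_le_card (sdiff_eq_empty_iff_subset.1 hempty)).not_gt S.S.hsmall

theorem SkipOn.disj_of_in_segment {S S' : SkipOn G red M 𝒞} (T : AltTrace G M C) {i j k l : ℕ}
    (hS : S.C = C) (hS' : S'.C = C) (hin : S.S.In (T.segment i k)) (hin' : S'.S.In (T.segment j l))
    (hik : i ≤ k) (hkj : k < j) (hjl : j ≤ l) (hl : l < T.n) : S.Disj S' := by
  obtain ⟨C, hC, S⟩ := S
  obtain ⟨C', hC', S'⟩ := S'
  subst hS hS'
  exact .inr ⟨rfl, T.segment i k, T.segment j l, T.segment_subset (by omega), T.segment_subset hl,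
    T.disjoint_segment hkj hl, T.isAltPath_segment hik (by omega), T.isAltPath_segment hjl hl,
    hin, hin'⟩

theorem HasZeroSkipCycleSet.of_finset {𝒮 : Finset (SkipOn G red M 𝒞)}
    {𝒟 : Finset (Finset (Sym2 V))} (h𝒟 : 𝒟 ⊆ 𝒞) (hne : 𝒮.Nonempty ∨ 𝒟.Nonempty)
    (hdisj : (𝒮 : Set (SkipOn G red M 𝒞)).Pairwise SkipOn.Disj) (hnotMem : ∀ S ∈ 𝒮, S.C ∉ 𝒟)
    (hsum : ∑ S ∈ 𝒮, S.S.w = ∑ C ∈ 𝒟, wSum red M C) : HasZeroSkipCycleSet G red M 𝒞 := by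
  refine ⟨𝒮.toList, 𝒟, h𝒟, hne.imp_left fun h => by simpa using h.ne_empty, ?_, by simpa, ?_⟩
  · exact 𝒮.nodup_toList.pairwise_of_forall_ne fun S hS S' hS' hne =>
      hdisj (by simpa using hS) (by simpa using hS') hne
  · rw [sum_map_toList, hsum, sub_self]

theorem AltTrace.exists_finset_skipOn {R : ℕ} (T : AltTrace G M C) (hM : IsPM G M)
    (hG : HasTwinCliques G 2 R) (hC : C ∈ 𝒞) {ε : ℤ} (hε : ε = 1 ∨ ε = -1) {s e : ℕ} (hse : s ≤ e)
    (he : e < T.n) (q : ℕ) (hrise : 2 * (R + 1) * q + 2 ≤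
      ε * (T.height (wt red M) e - T.height (wt red M) s)) :
    ∃ 𝒮 : Finset (SkipOn G red M 𝒞), #𝒮 = q ∧
      (𝒮 : Set (SkipOn G red M 𝒞)).Pairwise SkipOn.Disj ∧
      ∀ S ∈ 𝒮, S.C = C ∧ S.S.In (T.segment s e) ∧ 2 ≤ -ε * S.S.w ∧ -ε * S.S.w ≤ 4 := by
  classical
  induction q generalizing s with
  | zero => exact ⟨∅, rfl, by simp, by simp⟩
  | succ q ih =>
    push_cast at hrise
    have hRq : 0 ≤ (R + 1 : ℤ) * q := by positivity
    obtain ⟨p, hp, rfl, hpe, hlink, hheight⟩ :=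
      T.exists_strictMono_linkHeight_eq red hε hse (R + 1) (by push_cast; linarith)
    have hR : p R < p (R + 1) := hp R.lt_succ_self
    have h0R : p 0 ≤ p R := hp.monotone R.zero_le
    obtain ⟨S, hSin, hSw⟩ := T.exists_skip_of_linkHeight_eq hM hG hε hp (by omega)
      fun k hk => hlink k (by omega)
    push_cast at hheight
    obtain ⟨𝒮, hcard, hdisj, h𝒮⟩ := ih hpe (by linarith)
    have hS𝒮 : ∀ S' ∈ 𝒮, SkipOn.Disj ⟨C, hC, S⟩ S' := fun S' hS' =>
      SkipOn.disj_of_in_segment T rfl (h𝒮 S' hS').1 hSin (h𝒮 S' hS').2.1 h0R hR hpe he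
    refine ⟨insert ⟨C, hC, S⟩ 𝒮, ?_, ?_, ?_⟩
    · rw [card_insert_of_notMem fun h => (hS𝒮 _ h).ne rfl, hcard]
    · rw [coe_insert, Set.pairwise_insert]
      exact ⟨hdisj, fun S' hS' _ => ⟨hS𝒮 S' hS', (hS𝒮 S' hS').symm⟩⟩
    · intro S' hS'
      rcases mem_insert.1 hS' with rfl | hS'
      · exact ⟨rfl, hSin.trans (T.segment_mono le_rfl (by omega)), hSw⟩
      · obtain ⟨hC', hin, hw⟩ := h𝒮 S' hS'
        exact ⟨hC', hin.trans (T.segment_mono (by omega) le_rfl), hw⟩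

end SkipFamilies

/-! ### Cancelling families -/

theorem exists_subset_card_eq_of_mul_le {ι : Type*} {P : Finset ι} {f : ι → ℤ} {X m : ℕ}
    (hX : 0 < X) (hf : ∀ i ∈ P, 1 ≤ f i ∧ f i ≤ X) (hP : X * m ≤ #P) :
    ∃ c : ℕ, 0 < c ∧ c ≤ X ∧ ∃ P' ⊆ P, #P' = m ∧ ∀ i ∈ P', f i = c := by
  have hmaps : ∀ i ∈ P, (f i).toNat ∈ Icc 1 X := fun i hi => by
    have := hf i hi
    rw [mem_Icc]
    omega
  obtain ⟨c, hc, hcard⟩ := exists_le_card_fiber_of_mul_le_card_of_maps_to hmaps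
    (n := m) (nonempty_Icc.2 hX) (by simpa using hP)
  obtain ⟨P', hP', rfl⟩ := exists_subset_card_eq hcard
  obtain ⟨hc0, hcX⟩ := mem_Icc.1 hc
  refine ⟨c, hc0, hcX, P', hP'.trans (filter_subset _ _), rfl, fun i hi => ?_⟩
  have := (mem_filter.1 (hP' hi)).2
  omega

theorem exists_nonempty_subsets_sum_eq {ι κ : Type*} {P : Finset ι} {Q : Finset κ} {f : ι → ℤ}
    {g : κ → ℤ} {X Y : ℕ} (hX : 0 < X) (hY : 0 < Y) (hf : ∀ i ∈ P, 1 ≤ f i ∧ f i ≤ X)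
    (hg : ∀ j ∈ Q, 1 ≤ g j ∧ g j ≤ Y) (hP : X * Y ≤ #P) (hQ : X * Y ≤ #Q) :
    ∃ P' ⊆ P, ∃ Q' ⊆ Q, P'.Nonempty ∧ Q'.Nonempty ∧ ∑ i ∈ P', f i = ∑ j ∈ Q', g j := by
  obtain ⟨u, hu0, huX, P₁, hP₁, hcardP, hfu⟩ := exists_subset_card_eq_of_mul_le hX hf hP
  obtain ⟨v, hv0, hvY, Q₁, hQ₁, hcardQ, hgv⟩ :=
    exists_subset_card_eq_of_mul_le hY hg (mul_comm X Y ▸ hQ)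
  obtain ⟨P', hP', hcardP'⟩ := exists_subset_card_eq (hvY.trans_eq hcardP.symm)
  obtain ⟨Q', hQ', hcardQ'⟩ := exists_subset_card_eq (huX.trans_eq hcardQ.symm)
  refine ⟨P', hP'.trans hP₁, Q', hQ'.trans hQ₁, card_pos.1 (by omega), card_pos.1 (by omega), ?_⟩
  rw [sum_congr rfl fun i hi => hfu i (hP' hi), sum_congr rfl fun j hj => hgv j (hQ' hj),
    sum_const, sum_const, hcardP', hcardQ', nsmul_eq_mul, nsmul_eq_mul, mul_comm]

theorem card_le_of_forall_subset_sum_ne_zero {ι : Type*} {s : Finset ι} {f : ι → ℤ} {K Z t : ℕ}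
    (hK : 0 < K) (hZ : 0 < Z) (hf : ∀ i ∈ s, -Z ≤ f i ∧ f i ≤ K) (hsum : |∑ i ∈ s, f i| ≤ t)
    (hne : ∀ s' ⊆ s, s'.Nonempty → ∑ i ∈ s', f i ≠ 0) : #s ≤ K * Z * (K + Z + 1) + t := by
  classical
  have hf0 : ∀ i ∈ s, f i ≠ 0 := fun i hi => by simpa using hne {i} (by simpa) (by simp)
  have hpos : ∀ i ∈ s.filter (0 < f ·), 1 ≤ f i ∧ f i ≤ K := fun i hi => by grind
  have hneg : ∀ i ∈ s.filter (¬ 0 < f ·), 1 ≤ -f i ∧ -f i ≤ Z := fun i hi => by grind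
  have hsplit := sum_filter_add_sum_filter_not s (0 < f ·) f
  have hcard := card_filter_add_card_filter_not (s := s) (0 < f ·)
  have hposK := sum_le_card_nsmul _ _ _ fun i hi => (hpos i hi).2
  have hpos1 := card_nsmul_le_sum _ _ _ fun i hi => (hpos i hi).1
  have hnegZ := sum_le_card_nsmul _ _ _ fun i hi => (hneg i hi).2
  have hneg1 := card_nsmul_le_sum _ _ _ fun i hi => (hneg i hi).1
  simp only [sum_neg_distrib, nsmul_eq_mul, mul_one] at hposK hpos1 hnegZ hneg1
  have hfew : #(s.filter (0 < f ·)) < K * Z ∨ #(s.filter (¬ 0 < f ·)) < K * Z := by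
    by_contra hmany
    rw [not_or, not_lt, not_lt] at hmany
    obtain ⟨P, hP, Q, hQ, hPne, -, heq⟩ :=
      exists_nonempty_subsets_sum_eq hK hZ hpos hneg hmany.1 hmany.2
    have hPQ : Disjoint P Q := (disjoint_filter_filter_not s s _).mono hP hQ
    refine hne (P ∪ Q) (union_subset (hP.trans (filter_subset _ _)) (hQ.trans (filter_subset _ _)))
      (hPne.mono subset_union_left) ?_
    rw [sum_union hPQ, heq, sum_neg_distrib, neg_add_cancel]
  have hbound := abs_le.1 hsum
  zify at hcard hfew ⊢
  rcases hfew with hfew | hfew <;> nlinarith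

theorem exists_disjoint_rise_drop {H : ℕ → ℤ} (hH : ∀ i, |H (i + 1) - H i| ≤ 1) {n i j i' j' : ℕ}
    {Y : ℤ} (hY : 0 ≤ Y) (hij : i ≤ j) (hj : j < n) (hij' : i' ≤ j') (hj' : j' < n)
    (hrise : Y + 1 ≤ H j - H i) (hdrop : Y + 1 ≤ H i' - H j') :
    ∃ s e s' e', s ≤ e ∧ e < n ∧ s' ≤ e' ∧ e' < n ∧ (e < s' ∨ e' < s) ∧
      Y ≤ H e - H s ∧ Y ≤ H s' - H e' := by
  wlog hii' : i ≤ i' generalizing H i j i' j'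
  · obtain ⟨s, e, s', e', hse, he, hse', he', hdisj, hr, hd⟩ := this (H := fun i => -H i)
      (fun i => by simpa only [neg_sub_neg, abs_sub_comm] using hH i) hij' hj' hij hj
      (by linarith) (by linarith) (by omega)
    exact ⟨s', e', s, e, hse', he', hse, he, hdisj.symm, by linarith, by linarith⟩
  rcases lt_or_ge j i' with hji' | hi'j
  · exact ⟨i, j, i', j', hij, hj, hij', hj', .inl hji', by linarith, by linarith⟩
  rcases le_or_gt (Y + 1) (H i' - H i) with hhigh | hlow
  · obtain _ | m := i'
    · obtain rfl : i = 0 := by omega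
      omega
    have him : i ≠ m + 1 := by rintro rfl; omega
    have := abs_le.1 (hH m)
    exact ⟨i, m, m + 1, j', by omega, by omega, hij', hj', .inl m.lt_succ_self, by omega, by omega⟩
  rcases le_or_gt j j' with hjj' | hj'j
  · have hjj' : j ≠ j' := by rintro rfl; omega
    have := abs_le.1 (hH j)
    exact ⟨i, j, j + 1, j', hij, hj, by omega, hj', .inl j.lt_succ_self, by omega, by omega⟩
  · have := abs_le.1 (hH j')
    exact ⟨j' + 1, j, i', j', by omega, hj, hij', hj', .inr j'.lt_succ_self, by omega, by omega⟩

theorem le_card_filter_pos {ι : Type*} {s : Finset ι} {f : ι → ℤ} {i : ι} {K m t Z : ℕ}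
    (hi : i ∈ s) (hf : ∀ j ∈ s, f j ≤ K) (hsum : |∑ j ∈ s, f j| ≤ t) (hfi : f i < -Z)
    (hZ : K * m + t ≤ Z) : m ≤ #(s.filter (0 < f ·)) := by
  by_contra! hlt
  have hsplit := sum_filter_add_sum_filter_not s (0 < f ·) f
  have hpos := sum_le_card_nsmul (s.filter (0 < f ·)) f K fun j hj => hf j (mem_filter.1 hj).1
  have hneg : -f i ≤ ∑ j ∈ s.filter (¬ 0 < f ·), -f j :=
    single_le_sum (f := fun j => -f j) (fun j hj => by have := (mem_filter.1 hj).2; omega)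
      (mem_filter.2 ⟨hi, by omega⟩)
  have := abs_le.1 hsum
  zify at hlt hZ
  rw [nsmul_eq_mul] at hpos
  rw [sum_neg_distrib] at hneg
  nlinarith

theorem sum_sum_of_isAltCycleSet {V A : Type*} [DecidableEq V] [AddCommMonoid A]
    {G : SimpleGraph V} {M F : Finset (Sym2 V)} {𝒞 : Finset (Finset (Sym2 V))}
    (h𝒞 : IsAltCycleSet G M 𝒞) (hunion : 𝒞.biUnion id = F) (g : Sym2 V → A) :
    ∑ C ∈ 𝒞, ∑ e ∈ C, g e = ∑ e ∈ F, g e := by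
  have hdisj : (𝒞 : Set (Finset (Sym2 V))).PairwiseDisjoint id := fun C hC D hD hCD =>
    disjoint_of_disjoint_edgeVerts (h𝒞.2 hC hD hCD)
  rw [← hunion, sum_biUnion hdisj]
  rfl

section Rises

variable {V : Type*} [DecidableEq V] {G : SimpleGraph V} {red : Sym2 V → Bool}
  {M C : Finset (Sym2 V)} {𝒞 : Finset (Finset (Sym2 V))} {R K : ℕ} {ε : ℤ}

theorem AltTrace.abs_wSum_sub_height_le (T : AltTrace G M C) (red : Sym2 V → Bool) :
    |wSum red M C - T.height (wt red M) (T.n - 1)| ≤ 1 := by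
  have := T.abs_height_succ_sub_le red (T.n - 1)
  rwa [Nat.sub_add_cancel (Nat.one_le_of_lt T.two_le), ← T.sum_C] at this

theorem HasZeroSkipCycleSet.of_skipOn_of_skipOn {𝒮 𝒮' : Finset (SkipOn G red M 𝒞)}
    (h𝒮 : (𝒮 : Set (SkipOn G red M 𝒞)).Pairwise SkipOn.Disj)
    (h𝒮' : (𝒮' : Set (SkipOn G red M 𝒞)).Pairwise SkipOn.Disj)
    (hdisj : ∀ S ∈ 𝒮, ∀ S' ∈ 𝒮', S.Disj S') (hw : ∀ S ∈ 𝒮, 1 ≤ S.S.w ∧ S.S.w ≤ 4)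
    (hw' : ∀ S ∈ 𝒮', 1 ≤ -S.S.w ∧ -S.S.w ≤ 4) (hcard : 16 ≤ #𝒮) (hcard' : 16 ≤ #𝒮') :
    HasZeroSkipCycleSet G red M 𝒞 := by
  classical
  obtain ⟨P, hP, P', hP', hPne, -, heq⟩ := exists_nonempty_subsets_sum_eq (X := 4) (Y := 4)
    four_pos four_pos hw hw' hcard hcard'
  have hPP' : Disjoint P P' := disjoint_left.2 fun S hS hS' =>
    (hdisj S (hP hS) S (hP' hS')).ne rfl
  refine .of_finset (𝒮 := P ∪ P') (empty_subset _) (.inl (hPne.mono subset_union_left)) ?_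
    (by simp) ?_
  · rw [coe_union, Set.pairwise_union]
    exact ⟨h𝒮.mono hP, h𝒮'.mono hP', fun S hS S' hS' _ =>
      ⟨hdisj S (hP hS) S' (hP' hS'), (hdisj S (hP hS) S' (hP' hS')).symm⟩⟩
  · rw [sum_union hPP', heq, sum_neg_distrib, neg_add_cancel, sum_empty]

/-- In the direction `ε = ± 1`, the height of none of the traced cycles rises by `K` or more from
one position to a later one. -/
def RisesLT (red : Sym2 V → Bool) (T : ∀ C : 𝒞, AltTrace G M C) (ε K : ℤ) : Prop :=
  ∀ C s e, s ≤ e → e < (T C).n →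
    ε * ((T C).height (wt red M) e - (T C).height (wt red M) s) < K

theorem HasZeroSkipCycleSet.of_rise_of_drop (hM : IsPM G M) (hG : HasTwinCliques G 2 R)
    (T : ∀ C : 𝒞, AltTrace G M C) {C C' : 𝒞} {s e s' e' : ℕ} (hse : s ≤ e) (he : e < (T C).n)
    (hse' : s' ≤ e') (he' : e' < (T C').n) (hsep : C = C' → e < s' ∨ e' < s)
    (hrise : 32 * (R + 1) + 2 ≤ (T C).height (wt red M) e - (T C).height (wt red M) s)
    (hdrop : 32 * (R + 1) + 2 ≤ (T C').height (wt red M) s' - (T C').height (wt red M) e') :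
    HasZeroSkipCycleSet G red M 𝒞 := by
  obtain ⟨𝒮, hcard, hdisj, h𝒮⟩ := (T C).exists_finset_skipOn hM hG C.2 (.inl rfl) hse he 16
    (by push_cast; linarith)
  obtain ⟨𝒮', hcard', hdisj', h𝒮'⟩ := (T C').exists_finset_skipOn hM hG C'.2 (.inr rfl) hse' he'
    16 (by push_cast; linarith)
  refine .of_skipOn_of_skipOn hdisj' hdisj (fun S' hS' S hS => ?_)
    (fun S' hS' => ?_) (fun S hS => ?_) hcard'.ge hcard.ge
  · obtain ⟨hC, hin, -⟩ := h𝒮 S hS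
    obtain ⟨hC', hin', -⟩ := h𝒮' S' hS'
    by_cases hCC' : C = C'
    · subst hCC'
      rcases hsep rfl with hlt | hlt
      · exact (SkipOn.disj_of_in_segment (T C) hC hC' hin hin' hse hlt hse' he').symm
      · exact SkipOn.disj_of_in_segment (T C) hC' hC hin' hin hse' hlt hse he
    · exact .inl fun h => hCC' (Subtype.ext (hC.symm.trans (h.symm.trans hC')))
  · have := (h𝒮' S' hS').2.2
    omega
  · have := (h𝒮 S hS).2.2
    omega

theorem exists_risesLT (hM : IsPM G M) (hG : HasTwinCliques G 2 R) (T : ∀ C : 𝒞, AltTrace G M C)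
    (hzero : ¬ HasZeroSkipCycleSet G red M 𝒞) :
    ∃ ε : ℤ, (ε = 1 ∨ ε = -1) ∧ RisesLT red T ε (32 * (R + 1) + 3) := by
  by_contra! hrises
  have hup := hrises 1 (.inl rfl)
  have hdown := hrises (-1) (.inr rfl)
  simp only [RisesLT, not_forall, not_lt] at hup hdown
  obtain ⟨C, s, e, hse, he, hrise⟩ := hup
  obtain ⟨C', s', e', hse', he', hdrop⟩ := hdown
  by_cases hCC' : C = C'
  · subst hCC'
    obtain ⟨s, e, s', e', hse, he, hse', he', hsep, hr, hd⟩ := exists_disjoint_rise_drop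
      ((T C).abs_height_succ_sub_le red) (Y := 32 * (R + 1) + 2) (by positivity) hse he hse' he'
      (by linarith) (by linarith)
    exact hzero (.of_rise_of_drop hM hG T hse he hse' he' (fun _ => hsep) hr hd)
  · exact hzero (.of_rise_of_drop hM hG T hse he hse' he' (fun h => absurd h hCC')
      (by linarith) (by linarith))

theorem RisesLT.mul_wSum_le {T : ∀ C : 𝒞, AltTrace G M C} (h : RisesLT red T ε K)
    (hε : ε = 1 ∨ ε = -1) (C : 𝒞) : ε * wSum red M C ≤ K := by
  have hn := (T C).two_le
  have hrise := h C 0 ((T C).n - 1) (Nat.zero_le _) (by omega)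
  have hlast := abs_le.1 ((T C).abs_wSum_sub_height_le red)
  rw [AltTrace.height_zero] at hrise
  rcases hε with rfl | rfl <;> omega

theorem RisesLT.neg_le_mul_wSum {T : ∀ C : 𝒞, AltTrace G M C} {t Z : ℕ} (h : RisesLT red T ε K)
    (hε : ε = 1 ∨ ε = -1) (hM : IsPM G M) (hG : HasTwinCliques G 2 R)
    (hzero : ¬ HasZeroSkipCycleSet G red M 𝒞) (hsum : |∑ C ∈ 𝒞, wSum red M C| ≤ t) (hK : 0 < K)
    (hZK : K * (4 * K) + t ≤ Z) (hZR : 2 * (R + 1) * (4 * K) + 3 ≤ Z) (C : 𝒞) :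
    -Z ≤ ε * wSum red M C := by
  by_contra! hlow
  have hn := (T C).two_le
  have hlast := abs_le.1 ((T C).abs_wSum_sub_height_le red)
  have hsum' : |∑ C ∈ 𝒞, ε * wSum red M C| ≤ t := by
    rw [← mul_sum, abs_mul]
    rcases hε with rfl | rfl <;> simpa
  have hmany := le_card_filter_pos C.2 (fun D hD => h.mul_wSum_le hε ⟨D, hD⟩) hsum' hlow hZK
  obtain ⟨𝒮, hcard, hdisj, h𝒮⟩ := (T C).exists_finset_skipOn (red := red) hM hG C.2 (ε := -ε)
    (by omega)
    (Nat.zero_le ((T C).n - 1)) (by omega) (4 * K) (by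
      rw [AltTrace.height_zero]
      zify at hZR
      push_cast
      rcases hε with rfl | rfl <;> linarith)
  obtain ⟨𝒟, h𝒟, 𝒮', h𝒮', -, hne, heq⟩ := exists_nonempty_subsets_sum_eq
    (P := 𝒞.filter (0 < ε * wSum red M ·)) (Q := 𝒮) (f := fun D => ε * wSum red M D)
    (g := fun S => ε * S.S.w) (Y := 4) hK four_pos
    (fun D hD => ⟨(mem_filter.1 hD).2, h.mul_wSum_le hε ⟨D, (mem_filter.1 hD).1⟩⟩)
    (fun S hS => by have := (h𝒮 S hS).2.2; rw [neg_neg] at this; omega) (by omega) (by omega)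
  refine hzero (.of_finset (h𝒟.trans (filter_subset _ _)) (.inl hne) (hdisj.mono h𝒮') ?_ ?_)
  · rintro S hS hSD
    have := (mem_filter.1 (h𝒟 hSD)).2
    rw [(h𝒮 S (h𝒮' hS)).1] at this
    omega
  · rw [← mul_sum, ← mul_sum] at heq
    exact (mul_left_cancel₀ (by omega) heq).symm

theorem RisesLT.abs_height_sub_le {T : ∀ C : 𝒞, AltTrace G M C} {Z : ℕ} (h : RisesLT red T ε K)
    (hε : ε = 1 ∨ ε = -1) {C : 𝒞} (hC : -Z ≤ ε * wSum red M C) {i j : ℕ} (hi : i < (T C).n)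
    (hj : j < (T C).n) :
    |(T C).height (wt red M) i - (T C).height (wt red M) j| ≤ Z + 2 * K := by
  wlog hij : i ≤ j generalizing i j
  · rw [abs_sub_comm]
    exact this hj hi (by omega)
  have hn := (T C).two_le
  have hlast := abs_le.1 ((T C).abs_wSum_sub_height_le red)
  have h0 := h C 0 i (Nat.zero_le _) hi
  have hmid := h C i j hij hj
  have hend := h C j ((T C).n - 1) (by omega) (by omega)
  rw [AltTrace.height_zero] at h0
  rw [abs_le]
  rcases hε with rfl | rfl <;> constructor <;> linarith

theorem card_le_of_not_hasZeroSkipCycleSet {t Z : ℕ} (hε : ε = 1 ∨ ε = -1) (hK : 0 < K)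
    (hZ : 0 < Z) (hzero : ¬ HasZeroSkipCycleSet G red M 𝒞)
    (hsum : |∑ C ∈ 𝒞, wSum red M C| ≤ t)
    (hw : ∀ C ∈ 𝒞, -Z ≤ ε * wSum red M C ∧ ε * wSum red M C ≤ K) :
    #𝒞 ≤ K * Z * (K + Z + 1) + t := by
  refine card_le_of_forall_subset_sum_ne_zero hK hZ hw ?_ fun 𝒟 h𝒟 hne h0 => hzero ?_
  · rw [← mul_sum, abs_mul]
    rcases hε with rfl | rfl <;> simpa
  · rw [← mul_sum] at h0
    exact .of_finset (𝒮 := ∅) h𝒟 (.inr hne) (by simp) (by simp)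
      (by rw [(mul_eq_zero.1 h0).resolve_left (by omega), sum_empty])

theorem card_and_height_bounds (hM : IsPM G M) (hG : HasTwinCliques G 2 R)
    (T : ∀ C : 𝒞, AltTrace G M C) {t : ℕ} (hRt : R + 1 ≤ t)
    (hsum : |∑ C ∈ 𝒞, wSum red M C| ≤ t) (hzero : ¬ HasZeroSkipCycleSet G red M 𝒞) :
    #𝒞 ≤ 10 ^ 9 * t ^ 5 ∧ ∀ C i j, i < (T C).n → j < (T C).n →
      |(T C).height (wt red M) i - (T C).height (wt red M) j| ≤ 5100 * t ^ 2 := by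
  obtain ⟨ε, hε, hrises⟩ := exists_risesLT hM hG T hzero
  have ht0 : 0 < t := by omega
  have ht : t ≤ t ^ 2 := Nat.le_self_pow two_ne_zero t
  replace hrises : RisesLT red T ε (35 * t : ℕ) := fun C s e hse he =>
    (hrises C s e hse he).trans_le (by push_cast; omega)
  have hlow := hrises.neg_le_mul_wSum (Z := 5000 * t ^ 2) hε hM hG hzero hsum (by omega)
    (by nlinarith) (by nlinarith)
  constructor
  · refine (card_le_of_not_hasZeroSkipCycleSet hε (by omega) (by positivity) hzero hsum fun C hC =>
      ⟨hlow ⟨C, hC⟩, hrises.mul_wSum_le hε ⟨C, hC⟩⟩).trans ?_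
    calc 35 * t * (5000 * t ^ 2) * (35 * t + 5000 * t ^ 2 + 1) + t
        ≤ 35 * t * (5000 * t ^ 2) * (35 * t ^ 2 + 5000 * t ^ 2 + t ^ 2) + t ^ 5 := by
          gcongr
          · exact Nat.one_le_pow _ _ ht0
          · exact Nat.le_self_pow (by norm_num) t
      _ ≤ 10 ^ 9 * t ^ 5 := by ring_nf; omega
  · intro C i j hi hj
    refine (hrises.abs_height_sub_le hε (hlow C) hi hj).trans ?_
    push_cast
    zify at ht
    linarith

end Rises

/-! ### Monochromatic cliques -/

section MonoTwinCliques

variable {V : Type*}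

/-- Four positions below `n` at which both `x` and `y` span a clique all of whose edges have
colour `c`. -/
def ContainsMonoTwinCliques (G : SimpleGraph V) (red : Sym2 V → Bool) (c : Bool) (x y : ℕ → V)
    (n : ℕ) : Prop :=
  ∃ f : Fin 4 → ℕ, StrictMono f ∧ (∀ p, f p < n) ∧ ∀ p q, p ≠ q →
    (G.Adj (x (f p)) (x (f q)) ∧ red s(x (f p), x (f q)) = c) ∧
    (G.Adj (y (f p)) (y (f q)) ∧ red s(y (f p), y (f q)) = c)

/-- The analogue of `HasTwinCliques` for cliques of colour `c` on the endpoints of `n` distinct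
edges `s(x i, y i)` of `K` of colour `c`. -/
def HasMonoTwinCliques (G : SimpleGraph V) (red : Sym2 V → Bool) (c : Bool) (K : Finset (Sym2 V))
    (n : ℕ) : Prop :=
  ∀ x y : ℕ → V, Set.InjOn x (Set.Iio n) → Set.InjOn y (Set.Iio n) →
    (∀ i < n, ∀ j < n, x i ≠ y j) → (∀ i < n, s(x i, y i) ∈ K ∧ red s(x i, y i) = c) →
    ContainsMonoTwinCliques G red c x y n

variable [DecidableEq V] {G : SimpleGraph V} {red : Sym2 V → Bool} {M Z : Finset (Sym2 V)}

theorem IsPM.exists_isAltCycle_of_adj {x y x' y' : V} (hM : IsPM G M) (hxy : s(x, y) ∈ M)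
    (hxy' : s(x', y') ∈ M) (hx : G.Adj x x') (hy : G.Adj y y') (hne : x ≠ y') :
    s(x, x') ∉ M ∧ s(y, y') ∉ M ∧ ∃ Z, IsAltCycle G M Z ∧ edgeVerts Z ⊆ {x, y, x', y'} ∧
      ∀ g : Sym2 V → ℤ, ∑ e ∈ Z, g e = g s(x, y) + g s(x', y') + g s(x, x') + g s(y, y') := by
  have heq_of_mem {u v w : V} (huv : s(u, v) ∈ M) (huw : s(u, w) ∈ M) : v = w :=
    Sym2.congr_right.1 (hM.eq_of_mem huv huw (Sym2.mem_mk_left u v) (Sym2.mem_mk_left u w))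
  rw [Sym2.eq_swap] at hxy
  have hne' : y ≠ x' := fun h => hne (heq_of_mem hxy (h ▸ hxy'))
  have hxM : s(x, x') ∉ M := fun h => hne' (heq_of_mem (Sym2.eq_swap ▸ hxy) h)
  have hyM : s(y', y) ∉ M := fun h => hne (heq_of_mem hxy (Sym2.eq_swap ▸ h))
  have hyx : G.Adj y x := hM.1 hxy
  have hadj' : G.Adj x' y' := hM.1 hxy'
  have hp : IsMPath M (hyx.toWalk.append (.cons hx hadj'.toWalk)) :=
    (IsMPath.toWalk hyx hxy).append_cons (IsMPath.toWalk hadj' hxy') hx hxM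
      (by simp [hy.ne', hne'.symm, hx.ne', hne.symm])
  refine ⟨hxM, Sym2.eq_swap ▸ hyM, _, hp.isAltCycle hy.symm hyM, ?_, fun g => ?_⟩
  · rintro v ⟨e, he, hve⟩
    have he : e = s(y', y) ∨ e = s(y, x) ∨ e = s(x, x') ∨ e = s(x', y') := by simpa using he
    rcases he with rfl | rfl | rfl | rfl <;> rcases Sym2.mem_iff.1 hve with rfl | rfl <;> simp
  · rw [hp.sum_insert_edges hyM, Sym2.eq_swap (a := x) (b := y), Sym2.eq_swap (a := y) (b := y')]
    simp only [SimpleGraph.Walk.edges_append, SimpleGraph.Walk.edges_cons,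
      SimpleGraph.Walk.edges_nil, List.cons_append, List.nil_append, List.map_cons, List.map_nil,
      List.sum_cons, List.sum_nil]
    ring

theorem HasTwinCliques.containsMonoTwinCliques_or_exists_switch {R : ℕ}
    (hG : HasTwinCliques G 4 R) (hM : IsPM G M) {x y : ℕ → V} (hx : Set.InjOn x (Set.Iio R))
    (hy : Set.InjOn y (Set.Iio R)) (hxy : ∀ i < R, ∀ j < R, x i ≠ y j)
    (hblue : ∀ i < R, s(x i, y i) ∈ M ∧ red s(x i, y i) = false) :
    ContainsMonoTwinCliques G red false x y R ∨
      ∃ Z, IsPM G (sd M Z) ∧ edgeVerts Z ⊆ x '' Set.Iio R ∪ y '' Set.Iio R ∧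
        wSum red M Z = redCount red Z ∧ (redCount red Z = 1 ∨ redCount red Z = 2) := by
  obtain ⟨f, hf, hfR, hadj⟩ := hG x y hx hy
  by_cases hcol : ∀ p q, p ≠ q →
      red s(x (f p), x (f q)) = false ∧ red s(y (f p), y (f q)) = false
  · exact .inl ⟨f, hf, hfR, fun p q h =>
      ⟨⟨(hadj p q h).1, (hcol p q h).1⟩, (hadj p q h).2, (hcol p q h).2⟩⟩
  push Not at hcol
  obtain ⟨p, q, hpq, hred⟩ := hcol
  obtain ⟨hxyp, hp⟩ := hblue _ (hfR p)
  obtain ⟨hxyq, hq⟩ := hblue _ (hfR q)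
  obtain ⟨hxadj, hyadj⟩ := hadj p q hpq
  obtain ⟨hxM, hyM, Z, hZ, hverts, hsum⟩ :=
    hM.exists_isAltCycle_of_adj hxyp hxyq hxadj hyadj (hxy _ (hfR p) _ (hfR q))
  have hw : wSum red M Z = redCount red Z := by
    simp [redCount_eq_sum, wSum, hsum, wt, hxM, hyM, hp, hq]
  have hcard := redCount_eq_sum red Z
  rw [hsum, hp, hq] at hcard
  refine .inr ⟨Z, hZ.isPM_sd hM, fun v hv => ?_, hw, ?_⟩
  · rcases hverts hv with rfl | rfl | rfl | rfl
    exacts [.inl ⟨_, hfR p, rfl⟩, .inr ⟨_, hfR p, rfl⟩, .inl ⟨_, hfR q, rfl⟩,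
      .inr ⟨_, hfR q, rfl⟩]
  · grind

theorem HasTwinCliques.hasMonoTwinCliques_false {R : ℕ} (hG : HasTwinCliques G 4 R)
    (hM : IsPM G M)
    (hc : ¬ ∃ M₁, IsPM G M₁ ∧ redCount red M₁ = redCount red M + 2 ∧ redCount red (sd M M₁) = 2) :
    HasMonoTwinCliques G red false M (2 * R) := by
  intro x y hx hy hxy hblue
  have hne_two {Z : Finset (Sym2 V)} (hZ : IsPM G (sd M Z)) (hw : wSum red M Z = redCount red Z) :
      redCount red Z ≠ 2 := by
    intro h2
    have := redCount_sd red M Z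
    exact hc ⟨sd M Z, hZ, by omega, by rwa [sd_sd_cancel_left]⟩
  have hlow {i : ℕ} (hi : i < R) : i < 2 * R := by omega
  have hhigh {i : ℕ} (hi : i < R) : R + i < 2 * R := by omega
  have hinj {z : ℕ → V} (hz : Set.InjOn z (Set.Iio (2 * R))) {i j : ℕ} (hi : i < R) (hj : j < R) :
      z i ≠ z (R + j) := fun h => by have := hz (hlow hi) (hhigh hj) h; omega
  rcases hG.containsMonoTwinCliques_or_exists_switch hM
    (hx.mono fun i => hlow) (hy.mono fun i => hlow)
    (fun i hi j hj => hxy i (hlow hi) j (hlow hj)) (fun i hi => hblue i (hlow hi)) with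
    ⟨f, hf, hfR, hadj⟩ | ⟨Z, hZ, hverts, hw, hcard⟩
  · exact ⟨f, hf, fun p => hlow (hfR p), hadj⟩
  rcases hG.containsMonoTwinCliques_or_exists_switch hM (x := fun i => x (R + i))
    (y := fun i => y (R + i)) (fun i hi j hj h => by simpa using hx (hhigh hi) (hhigh hj) h)
    (fun i hi j hj h => by simpa using hy (hhigh hi) (hhigh hj) h)
    (fun i hi j hj => hxy _ (hhigh hi) _ (hhigh hj)) (fun i hi => hblue _ (hhigh hi)) with
    ⟨f, hf, hfR, hadj⟩ | ⟨Z', hZ', hverts', hw', hcard'⟩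
  · exact ⟨fun p => R + f p, hf.const_add R, fun p => hhigh (hfR p), hadj⟩
  have hdisj : Disjoint (edgeVerts Z) (edgeVerts Z') := by
    refine Set.disjoint_left.2 fun v hv hv' => ?_
    rcases hverts hv with ⟨i, hi, rfl⟩ | ⟨i, hi, rfl⟩ <;>
      rcases hverts' hv' with ⟨j, hj, h⟩ | ⟨j, hj, h⟩
    · exact hinj hx hi hj h.symm
    · exact hxy i (hlow hi) (R + j) (hhigh hj) h.symm
    · exact hxy (R + j) (hhigh hj) i (hlow hi) h
    · exact hinj hy hi hj h.symm
  have hdisj' := disjoint_of_disjoint_edgeVerts hdisj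
  have hwu : wSum red M (Z ∪ Z') = wSum red M Z + wSum red M Z' := sum_union hdisj'
  have hcardu : redCount red (Z ∪ Z') = redCount red Z + redCount red Z' := by
    rw [redCount, filter_union, card_union_of_disjoint (disjoint_filter_filter hdisj')]; rfl
  have h1 := hne_two hZ hw
  have h2 := hne_two hZ' hw'
  exact absurd (by omega) (hne_two (isPM_sd_union hZ hZ' hdisj) (by omega))

theorem IsPM.two_mul_card [Fintype V] (hM : IsPM G M) : 2 * #M = Fintype.card V := by
  have hdisj : (M : Set (Sym2 V)).PairwiseDisjoint Sym2.toFinset := by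
    refine fun e he f hf hne => Finset.disjoint_left.2 fun v hv hv' => hne ?_
    exact hM.eq_of_mem he hf (Sym2.mem_toFinset.1 hv) (Sym2.mem_toFinset.1 hv')
  have hunion : M.biUnion Sym2.toFinset = univ := by
    refine eq_univ_of_forall fun v => ?_
    obtain ⟨e, ⟨he, hve⟩, -⟩ := hM.2 v
    exact mem_biUnion.2 ⟨e, he, Sym2.mem_toFinset.2 hve⟩
  rw [← card_univ, ← hunion, card_biUnion hdisj, sum_const_nat (m := 2), mul_comm]
  exact fun e he => Sym2.card_toFinset_of_not_isDiag e (G.not_isDiag_of_mem_edgeSet (hM.1 he))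

theorem redCount_not (red : Sym2 V → Bool) (F : Finset (Sym2 V)) :
    redCount (fun e => !red e) F = blueCount red F := by
  simp [redCount, blueCount]

theorem redCount_add_blueCount (red : Sym2 V → Bool) (F : Finset (Sym2 V)) :
    redCount red F + blueCount red F = #F := by
  simpa [redCount, blueCount] using card_filter_add_card_filter_not (s := F) (red · = true)

theorem HasTwinCliques.hasMonoTwinCliques_true [Finite V] {R : ℕ} (hG : HasTwinCliques G 4 R)
    (hM : IsPM G M)
    (hd : ¬ ∃ M₁, IsPM G M₁ ∧ (redCount red M₁ : ℤ) = redCount red M - 2 ∧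
      blueCount red (sd M M₁) = 2) :
    HasMonoTwinCliques G red true M (2 * R) := by
  have := Fintype.ofFinite V
  have hcompl : HasMonoTwinCliques G (fun e => !red e) false M (2 * R) := by
    refine hG.hasMonoTwinCliques_false hM fun ⟨M₁, hM₁, hcard, htwo⟩ =>
      hd ⟨M₁, hM₁, ?_, by rwa [← redCount_not]⟩
    rw [redCount_not, redCount_not] at hcard
    have := hM.two_mul_card
    have := hM₁.two_mul_card
    have := redCount_add_blueCount red M
    have := redCount_add_blueCount red M₁
    omega
  simpa [HasMonoTwinCliques, ContainsMonoTwinCliques] using hcompl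

end MonoTwinCliques

/-! ### Length of a cycle -/

theorem exists_strictMonoOn_mem_of_le_card {S : Finset ℕ} {q : ℕ} (h : q ≤ #S) :
    ∃ g : ℕ → ℕ, StrictMonoOn g (Set.Iio q) ∧ ∀ i < q, g i ∈ S := by
  have hcard : #(S.finite_toSet).toFinset = #S := by simp
  refine ⟨Nat.nth (· ∈ S), ?_, fun i hi => ?_⟩
  · exact (Nat.nth_strictMonoOn S.finite_toSet).mono fun i hi => by
      rw [Set.mem_Iio] at hi ⊢
      exact hi.trans_le (h.trans hcard.ge)
  · exact Nat.nth_mem i fun _ => by omega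

theorem card_le_mul_of_card_fiber_le {ι : Type*} {S : Finset ι} {f : ι → ℤ} {L q : ℕ}
    (hf : ∀ i ∈ S, |f i| ≤ L) (hq : ∀ v, #{i ∈ S | f i = v} ≤ q) : #S ≤ (2 * L + 1) * q := by
  have hmaps : ∀ i ∈ S, f i ∈ Icc (-L : ℤ) L := fun i hi => mem_Icc.2 (abs_le.1 (hf i hi))
  refine (card_le_mul_card_image_of_maps_to hmaps q fun v _ => hq v).trans_eq ?_
  rw [Int.card_Icc, mul_comm]
  congr 1
  omega

section Length

variable {V : Type*} [DecidableEq V] {G : SimpleGraph V} {red : Sym2 V → Bool} {c : Bool}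
  {M K C : Finset (Sym2 V)} {𝒞 : Finset (Finset (Sym2 V))} {g : ℕ → ℕ} {q q' L : ℕ} {v : ℤ}

theorem HasZeroSkipCycleSet.of_skip (hC : C ∈ 𝒞) {S : Skip G red M C} (hS : S.w = 0) :
    HasZeroSkipCycleSet G red M 𝒞 :=
  ⟨[⟨C, hC, S⟩], ∅, by simp, by simp, by simp, by simp, by simpa using hS⟩

namespace AltTrace

variable (T : AltTrace G M C)

theorem exists_zero_skip_of_matching_edges (hM : IsPM G M)
    (hK : HasMonoTwinCliques G red c K q) (hg : StrictMonoOn g (Set.Iio q))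
    (hn : ∀ i < q, g i < T.n)
    (hedge : ∀ i < q, s(T.a (g i), T.b (g i)) ∈ K ∧ red s(T.a (g i), T.b (g i)) = c)
    (hv : ∀ i < q, T.height (wt red M) (g i) = v) : ∃ S : Skip G red M C, S.w = 0 := by
  obtain ⟨f, hf, hfq, hcl⟩ := hK (fun i => T.a (g i)) (fun i => T.b (g i))
    (T.injOn_a.comp hg.injOn hn) (T.injOn_b.comp hg.injOn hn) (fun i _ j _ => T.a_ne_b _ _) hedge
  have hlt {p p' : Fin 4} (h : p < p') : g (f p) < g (f p') := hg (hfq p) (hfq p') (hf h)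
  have h01 : g (f 0) < g (f 1) := hlt (by decide)
  have h12 : g (f 1) < g (f 2) := hlt (by decide)
  have h23 : g (f 2) < g (f 3) := hlt (by decide)
  obtain ⟨hbadj, hbcol⟩ := (hcl 0 2 (by decide)).2
  obtain ⟨haadj, hacol⟩ := (hcl 2 3 (by decide)).1
  have hw : 0 = wt red M s(T.b (g (f 0)), T.b (g (f 2))) + wt red M s(T.a (g (f 2)), T.a (g (f 3)))
      - T.linkHeight (wt red M) (g (f 0)) (g (f 2))
      - T.linkHeight (wt red M) (g (f 2)) (g (f 3)) := by
    simp [linkHeight, hv _ (hfq _), wt, T.mem, T.mk_a_a_notMem hM, T.mk_b_b_notMem hM, hbcol, hacol,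
      (hedge _ (hfq _)).2]
    cases c <;> rfl
  obtain ⟨S, hS, -⟩ := T.exists_skip hM (h01.trans h12) le_rfl h23 (hn _ (hfq 3))
    (.inl (by omega)) hbadj haadj hw (by simp)
  exact ⟨S, hS⟩

theorem exists_zero_skip_of_link_edges (hM : IsPM G M)
    (hK : HasMonoTwinCliques G red true K q) (hg : StrictMonoOn g (Set.Iio q))
    (hn : ∀ i < q, g i + 1 < T.n)
    (hedge : ∀ i < q, s(T.b (g i), T.a (g i + 1)) ∈ K ∧ red s(T.b (g i), T.a (g i + 1)) = true)
    (hv : ∀ i < q, T.height (wt red M) (g i + 1) = v) : ∃ S : Skip G red M C, S.w = 0 := by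
  obtain ⟨f, hf, hfq, hcl⟩ := hK (fun i => T.b (g i)) (fun i => T.a (g i + 1))
    (T.injOn_b.comp hg.injOn fun i hi => Nat.lt_of_succ_lt (hn i hi))
    (T.injOn_a.comp (fun i hi j hj h => hg.injOn hi hj (by simpa using h)) hn)
    (fun i _ j _ => (T.a_ne_b _ _).symm) hedge
  have hlt {p p' : Fin 4} (h : p < p') : g (f p) < g (f p') := hg (hfq p) (hfq p') (hf h)
  have h01 : g (f 0) < g (f 1) := hlt (by decide)
  have h12 : g (f 1) < g (f 2) := hlt (by decide)
  obtain ⟨hbadj, hbcol⟩ := (hcl 0 2 (by decide)).1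
  obtain ⟨haadj, hacol⟩ := (hcl 1 2 (by decide)).2
  have hwb : wt red M s(T.b (g (f 0)), T.b (g (f 2))) = 1 := by
    simp [wt_of_notMem (T.mk_b_b_notMem hM), hbcol]
  have hwa : wt red M s(T.a (g (f 1) + 1), T.a (g (f 2) + 1)) = 1 := by
    simp [wt_of_notMem (T.mk_a_a_notMem hM), hacol]
  have hlink (p p' : Fin 4) : T.linkHeight (wt red M) (g (f p)) (g (f p') + 1) = 1 := by
    rw [linkHeight, hv _ (hfq p'), ← hv _ (hfq p), height_succ, wt_of_notMem (T.notMem _),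
      (hedge _ (hfq p)).2]
    simp
  obtain ⟨S, hS, -⟩ := T.exists_skip hM (by omega) h12 (Nat.lt_succ_self _) (hn _ (hfq 2))
    (.inl (by omega)) hbadj haadj (w := 0) (by rw [hwb, hwa, hlink, hlink]; rfl) (by simp)
  exact ⟨S, hS⟩

theorem card_matching_edges_le (hM : IsPM G M) (hC : C ∈ 𝒞)
    (hzero : ¬ HasZeroSkipCycleSet G red M 𝒞) (hK : HasMonoTwinCliques G red c K q)
    (hL : ∀ i < T.n, |T.height (wt red M) i| ≤ L) {m : ℕ} (hm : m ≤ T.n) :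
    #{i ∈ range m | s(T.a i, T.b i) ∈ K ∧ red s(T.a i, T.b i) = c} ≤ (2 * L + 1) * q := by
  refine card_le_mul_of_card_fiber_le (f := T.height (wt red M)) (fun i hi => ?_) fun v => ?_
  · exact hL i ((mem_range.1 (mem_filter.1 hi).1).trans_le hm)
  by_contra! hlt
  obtain ⟨g, hg, hmem⟩ := exists_strictMonoOn_mem_of_le_card hlt.le
  simp only [mem_filter, mem_range] at hmem
  obtain ⟨S, hS⟩ := T.exists_zero_skip_of_matching_edges hM hK hg
    (fun i hi => (hmem i hi).1.1.trans_le hm) (fun i hi => (hmem i hi).1.2)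
    fun i hi => (hmem i hi).2
  exact hzero (.of_skip hC hS)

theorem card_link_edges_le (hM : IsPM G M) (hC : C ∈ 𝒞)
    (hzero : ¬ HasZeroSkipCycleSet G red M 𝒞) (hK : HasMonoTwinCliques G red true K q)
    (hL : ∀ i < T.n, |T.height (wt red M) i| ≤ L) :
    #{i ∈ range (T.n - 1) | s(T.b i, T.a (i + 1)) ∈ K ∧ red s(T.b i, T.a (i + 1)) = true} ≤
      (2 * L + 1) * q := by
  refine card_le_mul_of_card_fiber_le (f := fun i => T.height (wt red M) (i + 1))
    (fun i hi => hL _ ?_) fun v => ?_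
  · have := mem_range.1 (mem_filter.1 hi).1
    omega
  by_contra! hlt
  obtain ⟨g, hg, hmem⟩ := exists_strictMonoOn_mem_of_le_card hlt.le
  simp only [mem_filter, mem_range] at hmem
  obtain ⟨S, hS⟩ := T.exists_zero_skip_of_link_edges hM hK hg
    (fun i hi => by have := (hmem i hi).1.1; omega) (fun i hi => (hmem i hi).1.2)
    fun i hi => (hmem i hi).2
  exact hzero (.of_skip hC hS)

theorem height_wt (red : Sym2 V → Bool) (k : ℕ) : T.height (wt red M) k =
    #{i ∈ range k | red s(T.b i, T.a (i + 1)) = true} -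
      #{i ∈ range k | red s(T.a i, T.b i) = true} := by
  have hwt (i : ℕ) : wt red M s(T.a i, T.b i) + wt red M s(T.b i, T.a (i + 1)) =
      (if red s(T.b i, T.a (i + 1)) then 1 else 0) - if red s(T.a i, T.b i) then 1 else 0 := by
    rw [wt_of_mem (T.mem i), wt_of_notMem (T.notMem i)]
    split_ifs <;> rfl
  simp_rw [height, hwt, sum_sub_distrib, sum_boole]

theorem n_le (hM : IsPM G M) (hC : C ∈ 𝒞) (hzero : ¬ HasZeroSkipCycleSet G red M 𝒞)
    (hblue : HasMonoTwinCliques G red false M q) (hred : HasMonoTwinCliques G red true K q')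
    (hCK : C ⊆ sd M K) (hL : ∀ i < T.n, |T.height (wt red M) i| ≤ L) :
    T.n ≤ (2 * L + 1) * q + (2 * L + 1) * q' + L + 1 := by
  have hmemK {i : ℕ} (hi : i < T.n) : s(T.b i, T.a (i + 1)) ∈ K :=
    ((mem_sd.1 (hCK ((T.mem_C_iff _).2 ⟨i, hi, .inr rfl⟩))).resolve_left
      fun h => T.notMem i h.1).1
  have hmatching := T.card_matching_edges_le hM hC hzero hblue hL (Nat.sub_le _ 1)
  have hlink := T.card_link_edges_le hM hC hzero hred hL
  rw [filter_congr fun i _ => and_iff_right (T.mem i)] at hmatching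
  rw [filter_congr fun i hi => and_iff_right
    (hmemK (by have := mem_range.1 hi; omega))] at hlink
  have hsplit : #{i ∈ range (T.n - 1) | red s(T.a i, T.b i) = true} +
      #{i ∈ range (T.n - 1) | red s(T.a i, T.b i) = false} = T.n - 1 := by
    simpa using card_filter_add_card_filter_not (s := range (T.n - 1))
      (fun i => red s(T.a i, T.b i) = true)
  have hheight := T.height_wt red (T.n - 1)
  have hbound := abs_le.1 (hL (T.n - 1) (by have := T.two_le; omega))
  omega

theorem n_le_add_card_inter (hM : IsPM G M) (hC : C ∈ 𝒞)
    (hzero : ¬ HasZeroSkipCycleSet G red M 𝒞) (hblue : HasMonoTwinCliques G red false M q)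
    (hred : HasMonoTwinCliques G red true K q')
    (hL : ∀ i < T.n, |T.height (wt red M) i| ≤ L) :
    T.n ≤ (2 * L + 1) * q + (2 * L + 1) * q' + #(C ∩ sd M K) := by
  have hM_blue := T.card_matching_edges_le hM hC hzero hblue hL le_rfl
  have hK_red := T.card_matching_edges_le hM hC hzero hred hL le_rfl
  have hsd : #{i ∈ range T.n | s(T.a i, T.b i) ∈ sd M K} ≤ #(C ∩ sd M K) := by
    refine card_le_card_of_injOn (fun i => s(T.a i, T.b i)) (fun i hi => ?_) fun i hi j hj h => ?_
    · obtain ⟨hi, hmem⟩ := mem_filter.1 hi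
      exact mem_inter.2 ⟨(T.mem_C_iff _).2 ⟨i, mem_range.1 hi, .inl rfl⟩, hmem⟩
    · have h : T.a i = T.a j ∧ T.b i = T.b j := by simpa [T.a_ne_b] using h
      exact T.injOn_a (mem_range.1 (mem_filter.1 hi).1) (mem_range.1 (mem_filter.1 hj).1) h.1
  have hcover : range T.n ⊆ {i ∈ range T.n | s(T.a i, T.b i) ∈ M ∧ red s(T.a i, T.b i) = false} ∪
      {i ∈ range T.n | s(T.a i, T.b i) ∈ K ∧ red s(T.a i, T.b i) = true} ∪
      {i ∈ range T.n | s(T.a i, T.b i) ∈ sd M K} := by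
    intro i hi
    have := T.mem i
    simp only [mem_union, mem_filter, mem_sd]
    grind
  have hcard := (card_le_card hcover).trans
    ((card_union_le _ _).trans (Nat.add_le_add_right (card_union_le _ _) _))
  rw [card_range] at hcard
  omega

end AltTrace

end Length

/-! ### Distance of perfect matchings -/

theorem AltTrace.card_eq {V : Type*} {G : SimpleGraph V} {M C : Finset (Sym2 V)}
    (T : AltTrace G M C) : #C = 2 * T.n := by
  have := T.sum_C fun _ => 1
  rw [T.height_const, sum_const, nsmul_one] at this
  omega

section Distance

variable {V : Type*} [DecidableEq V] {G : SimpleGraph V} {red : Sym2 V → Bool}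
  {M M' N K F : Finset (Sym2 V)} {𝒞 : Finset (Finset (Sym2 V))} {R t ℓ m : ℕ}

theorem card_le_of_altTrace (h𝒞 : IsAltCycleSet G M 𝒞) (hunion : 𝒞.biUnion id = F)
    (T : ∀ C : 𝒞, AltTrace G M C) (hm : #𝒞 ≤ m) (hn : ∀ C, (T C).n ≤ ℓ + #(↑C ∩ K)) :
    #F ≤ 2 * (m * ℓ) + 2 * #(F ∩ K) := by
  calc #F = ∑ C ∈ 𝒞, #C := by
        simp_rw [card_eq_sum_ones]
        exact (sum_sum_of_isAltCycleSet h𝒞 hunion _).symm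
    _ ≤ ∑ C ∈ 𝒞, (2 * ℓ + 2 * #(C ∩ K)) := sum_le_sum fun C hC => by
        have := hn ⟨C, hC⟩
        have := (T ⟨C, hC⟩).card_eq
        dsimp only at *
        omega
    _ = #𝒞 * (2 * ℓ) + 2 * #(F ∩ K) := by
        rw [sum_add_distrib, sum_const, smul_eq_mul, ← mul_sum]
        simp_rw [← filter_mem_eq_inter, card_filter]
        rw [sum_sum_of_isAltCycleSet h𝒞 hunion]
    _ ≤ 2 * (m * ℓ) + 2 * #(F ∩ K) := by
        rw [mul_left_comm]
        gcongr

theorem n_bound_le (hRt : R + 1 ≤ t) :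
    (2 * (5100 * t ^ 2) + 1) * (2 * R) + (2 * (5100 * t ^ 2) + 1) * (2 * R) + 5100 * t ^ 2 + 1 ≤
      40804 * t ^ 3 := by
  have ht : 1 ≤ t ^ 2 := Nat.one_le_pow _ _ (by omega)
  calc (2 * (5100 * t ^ 2) + 1) * (2 * R) + (2 * (5100 * t ^ 2) + 1) * (2 * R) + 5100 * t ^ 2 + 1
      ≤ (2 * (5100 * t ^ 2) + t ^ 2) * (2 * R) + (2 * (5100 * t ^ 2) + t ^ 2) * (2 * R) +
          5100 * t ^ 2 + t ^ 2 := by gcongr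
    _ ≤ 40804 * t ^ 2 * (R + 1) := by ring_nf; omega
    _ ≤ 40804 * t ^ 2 * t := by gcongr
    _ = 40804 * t ^ 3 := by ring

theorem exists_altTrace_bounds [Finite V] (hM : IsPM G M) (hN : IsPM G N)
    (hG : HasTwinCliques G 2 R) (hRt : R + 1 ≤ t) (hw : |wSum red M (sd M N)| ≤ t)
    (hzero : ∀ 𝒞, IsAltCycleSet G M 𝒞 → 𝒞.biUnion id = sd M N →
      ¬ HasZeroSkipCycleSet G red M 𝒞) :
    ∃ (𝒞 : Finset (Finset (Sym2 V))) (T : ∀ C : 𝒞, AltTrace G M C), IsAltCycleSet G M 𝒞 ∧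
      𝒞.biUnion id = sd M N ∧ #𝒞 ≤ 10 ^ 9 * t ^ 5 ∧
      ∀ C, ∀ i < (T C).n, |(T C).height (wt red M) i| ≤ (5100 * t ^ 2 : ℕ) := by
  obtain ⟨𝒞, h𝒞, hunion, htrace⟩ := exists_altTrace_decomposition hM hN
  have T (C : 𝒞) : AltTrace G M C := (htrace C C.2).some
  obtain ⟨hcard, hheight⟩ := card_and_height_bounds hM hG T hRt
    ((sum_sum_of_isAltCycleSet h𝒞 hunion (wt red M)).symm ▸ hw) (hzero 𝒞 h𝒞 hunion)
  refine ⟨𝒞, T, h𝒞, hunion, hcard, fun C i hi => ?_⟩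
  simpa [AltTrace.height_zero] using hheight C i 0 hi (by omega)

theorem card_sd_le [Finite V] (hM : IsPM G M) (hN : IsPM G N)
    (hG : HasTwinCliques G 2 R) (hRt : R + 1 ≤ t) (hw : |wSum red M (sd M N)| ≤ t)
    (hzero : ∀ 𝒞, IsAltCycleSet G M 𝒞 → 𝒞.biUnion id = sd M N → ¬ HasZeroSkipCycleSet G red M 𝒞)
    (hblue : HasMonoTwinCliques G red false M (2 * R))
    (hred : HasMonoTwinCliques G red true N (2 * R)) :
    #(sd M N) ≤ 10 ^ 14 * t ^ 8 := by
  obtain ⟨𝒞, T, h𝒞, hunion, hcard, hheight⟩ := exists_altTrace_bounds hM hN hG hRt hw hzero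
  have hn (C : 𝒞) : (T C).n ≤ 40804 * t ^ 3 + #(↑C ∩ (∅ : Finset (Sym2 V))) :=
    ((T C).n_le hM C.2 (hzero 𝒞 h𝒞 hunion) hblue hred
      (hunion ▸ subset_biUnion_of_mem id C.2) (hheight C)).trans (by simpa using n_bound_le hRt)
  have := card_le_of_altTrace h𝒞 hunion T hcard hn
  rw [inter_empty, card_empty] at this
  exact this.trans (by ring_nf; omega)

theorem card_sd_le_add_card_inter [Finite V] (hM : IsPM G M) (hN : IsPM G N)
    (hG : HasTwinCliques G 2 R) (hRt : R + 1 ≤ t) (hw : |wSum red M (sd M N)| ≤ t)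
    (hzero : ∀ 𝒞, IsAltCycleSet G M 𝒞 → 𝒞.biUnion id = sd M N → ¬ HasZeroSkipCycleSet G red M 𝒞)
    (hblue : HasMonoTwinCliques G red false M (2 * R))
    (hred : HasMonoTwinCliques G red true K (2 * R)) :
    #(sd M N) ≤ 10 ^ 14 * t ^ 8 + 2 * #(sd M N ∩ sd M K) := by
  obtain ⟨𝒞, T, h𝒞, hunion, hcard, hheight⟩ := exists_altTrace_bounds hM hN hG hRt hw hzero
  have hn (C : 𝒞) : (T C).n ≤ 40804 * t ^ 3 + #(↑C ∩ sd M K) := by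
    have := (T C).n_le_add_card_inter hM C.2 (hzero 𝒞 h𝒞 hunion) hblue hred (hheight C)
    have := n_bound_le hRt
    omega
  exact (card_le_of_altTrace h𝒞 hunion T hcard hn).trans (by ring_nf; omega)

theorem exists_isPM_redCount_eq_forall_not_hasZeroSkipCycleSet (hM : IsPM G M) (hN : IsPM G N) :
    ∃ N', IsPM G N' ∧ redCount red N' = redCount red N ∧
      ∀ 𝒞, IsAltCycleSet G M 𝒞 → 𝒞.biUnion id = sd M N' → ¬ HasZeroSkipCycleSet G red M 𝒞 := by
  obtain ⟨N', ⟨hN', hred⟩, hmin⟩ := (measure fun N' => #(sd M N')).wf.has_min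
    {N' | IsPM G N' ∧ redCount red N' = redCount red N} ⟨N, hN, rfl⟩
  refine ⟨N', hN', hred, fun 𝒞 h𝒞 hunion hzero => ?_⟩
  obtain ⟨N'', hN'', hred', hlt⟩ := hzero.exists_isPM_card_sd_lt hM hN' h𝒞 fun C hC =>
    hunion ▸ subset_biUnion_of_mem id hC
  exact hmin N'' ⟨hN'', hred'.trans hred⟩ hlt

end Distance

theorem key_lemma_symdiff_bound_general {V : Type*} [Finite V] [DecidableEq V] {G : SimpleGraph V}
    {red : Sym2 V → Bool} {k : ℤ} {t : ℕ} {M M' : Finset (Sym2 V)}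
    (ht : ramsey (ramsey 4 (indepNum G + 1)) (indepNum G + 1) < t)
    (hM : IsPM G M) (hM' : IsPM G M') (hk : redCount red M ≤ k) (hk' : k ≤ redCount red M')
    (hw : |wSum red M (sd M M')| ≤ t)
    (hc : ¬ ∃ M₁, IsPM G M₁ ∧ redCount red M₁ = redCount red M + 2 ∧ redCount red (sd M M₁) = 2)
    (hd : ¬ ∃ M₁, IsPM G M₁ ∧ (redCount red M₁ : ℤ) = redCount red M' - 2 ∧
      blueCount red (sd M' M₁) = 2)
    (hzero : ∀ 𝒞, IsAltCycleSet G M 𝒞 → 𝒞.biUnion id = sd M M' → ¬ HasZeroSkipCycleSet G red M 𝒞)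
    (hyes : ∃ N, IsPM G N ∧ redCount red N = k) :
    ∃ N, IsPM G N ∧ redCount red N = k ∧ #(sd M N) ≤ 10 ^ 15 * t ^ 8 := by
  obtain ⟨N₀, hN₀, hN₀k⟩ := hyes
  obtain ⟨N, hN, hNN₀, hNzero⟩ := exists_isPM_redCount_eq_forall_not_hasZeroSkipCycleSet
    (red := red) hM hN₀
  have hNk : redCount red N = k := by omega
  have hG := hasTwinCliques_ramsey G 4
  have hblue := hG.hasMonoTwinCliques_false hM hc
  have hred := hG.hasMonoTwinCliques_true hM' hd
  have hNw : |wSum red M (sd M N)| ≤ t := by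
    rw [wSum_sd, abs_le] at hw ⊢
    omega
  have hMM' := card_sd_le hM hM' (hG.mono (by norm_num)) ht hw hzero hblue hred
  have hMN := card_sd_le_add_card_inter hM hN (hG.mono (by norm_num)) ht hNw hNzero hblue hred
  have hinter : #(sd M N ∩ sd M M') ≤ #(sd M M') := card_le_card inter_subset_right
  exact ⟨N, hN, hNk, by omega⟩

theorem pow_eight_le_four_mul_cube {t' : ℕ} (ht' : 10 ^ 4 ≤ t') :
    10 ^ 15 * t' ^ 8 ≤ 4 * (4 * t' ^ 4) ^ 3 := by
  calc 10 ^ 15 * t' ^ 8 ≤ 256 * (10 ^ 4) ^ 4 * t' ^ 8 := by gcongr; norm_num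
    _ ≤ 256 * t' ^ 4 * t' ^ 8 := by gcongr
    _ = 4 * (4 * t' ^ 4) ^ 3 := by ring

/-- The key lemma: let `t = 256·4^{2α}`, `t' = max(1000t⁶, 20·R(R(4,α+1),α+1))` and
`t'' = 4t'⁴`, and let `M`, `M'` be PMs with (a) `r(M) < k−1`, `r(M') > k`,
(b) `|w_M(M Δ M')| ≤ t`, (c) no PM `M1` with `r(M1) = r(M)+2` and `|R(M Δ M1)| = 2`,
(d) no PM `M1'` with `r(M1') = r(M')−2` and `|B(M' Δ M1')| = 2`, (e) the cycles of
`M Δ M'` contain no 0-skip, and (f) they contain no 0-skip-cycle set. If `G` has a PM with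
exactly `k` red edges, then it has one, `M*`, with `|E(M Δ M*)| ≤ 4t''³`. -/
theorem key_lemma_symdiff_bound
    {V : Type*} [Fintype V] [DecidableEq V] (G : SimpleGraph V) (red : Sym2 V → Bool)
    (k : ℤ) (t t' t'' : ℕ)
    (ht : t = 256 * 4 ^ (2 * indepNum G))
    (ht' : t' = max (1000 * t ^ 6)
      (20 * ramsey (ramsey 4 (indepNum G + 1)) (indepNum G + 1)))
    (ht'' : t'' = 4 * t' ^ 4)
    (M M' : Finset (Sym2 V)) (hM : IsPM G M) (hM' : IsPM G M')
    (ha1 : (redCount red M : ℤ) < k - 1) (ha2 : k < (redCount red M' : ℤ))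
    (hb : |wSum red M (sd M M')| ≤ (t : ℤ))
    (hc : ¬ ∃ M1 : Finset (Sym2 V), IsPM G M1 ∧
      redCount red M1 = redCount red M + 2 ∧ redCount red (sd M M1) = 2)
    (hd : ¬ ∃ M1' : Finset (Sym2 V), IsPM G M1' ∧
      (redCount red M1' : ℤ) = (redCount red M' : ℤ) - 2 ∧ blueCount red (sd M' M1') = 2)
    (he : ¬ ∃ C : Finset (Sym2 V), IsAltCycle G M C ∧ C ⊆ sd M M' ∧
      ∃ S : Skip G red M C, S.w = 0)
    (hf : ∀ 𝒞 : Finset (Finset (Sym2 V)), IsAltCycleSet G M 𝒞 →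
      𝒞.biUnion id = sd M M' → ¬ HasZeroSkipCycleSet G red M 𝒞)
    (hyes : ∃ N : Finset (Sym2 V), IsPM G N ∧ (redCount red N : ℤ) = k) :
    ∃ Mstar : Finset (Sym2 V), IsPM G Mstar ∧ (redCount red Mstar : ℤ) = k ∧
      (sd M Mstar).card ≤ 4 * t'' ^ 3 := by
  have ht_pos : 0 < t := ht ▸ by positivity
  have ht_le : 1000 * t ≤ 1000 * t ^ 6 := Nat.mul_le_mul_left _ (Nat.le_self_pow (by norm_num) t)
  have hmax := max_le_iff.1 ht'.ge
  obtain ⟨Mstar, hMstar, hk, hcard⟩ := key_lemma_symdiff_bound_general (t := t') (by omega) hM hM'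
    (by omega) (by omega) (by omega) hc hd hf hyes
  exact ⟨Mstar, hMstar, hk, hcard.trans (ht'' ▸ pow_eight_le_four_mul_cube (by omega))⟩
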